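/- arXiv:2008.12944 — 5 statements merged into one kernel-verified Lean document; each statement's English description precedes it below -/
import Mathlib

section
/- Let k be an algebraically closed field and let f_1, f_2, ..., f_s be nonconstant homogeneous polynomials in the polynomial ring k[x_1, ..., x_r]. If r > s, then there exists a nonzero point γ = (γ_1, ..., γ_r) ∈ k^r \ {0} such that f_1(γ) = 0, f_2(γ) = 0, ..., f_s(γ) = 0. -/
open MvPolynomial

/-- Kill the first `j` variables. -/
noncomputable def killVars (k : Type*) [Field k] (r j : ℕ) :
    MvPolynomial (Fin r) k →ₐ[k] MvPolynomial (Fin r) k :=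
  aeval (fun i => if i.1 < j then 0 else X i)

lemma killVars_comp {k : Type*} [Field k] {r j l : ℕ} (h : j ≤ l) :
    (killVars k r l).comp (killVars k r j) = killVars k r l := by
  ext1 i
  by_cases h1 : i.1 < j
  · have h2 : i.1 < l := by omega
    simp [killVars, h1, h2]
  · simp [killVars, h1]

lemma killVars_lt {k : Type*} [Field k] {r j : ℕ} (h : j < r) :
    RingHom.ker (killVars k r j) < RingHom.ker (killVars k r (j + 1)) := by
  refine lt_of_le_of_ne ?_ ?_
  · intro p hp
    rw [RingHom.mem_ker] at hp ⊢
    rw [← killVars_comp (Nat.le_succ j), AlgHom.comp_apply, hp, map_zero]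
  · intro he
    have h1 : (X ⟨j, h⟩ : MvPolynomial (Fin r) k) ∈ RingHom.ker (killVars k r (j + 1)) := by
      simp [RingHom.mem_ker, killVars]
    rw [← he] at h1
    simp [RingHom.mem_ker, killVars] at h1

lemma killVars_last {k : Type*} [Field k] {r : ℕ} (p : MvPolynomial (Fin r) k) :
    killVars k r r p = C (eval 0 p) := by
  have : killVars k r r = (Algebra.ofId k _).comp (aeval (0 : Fin r → k)) := by
    ext1 i
    simp [killVars]
  rw [this]
  simp [Algebra.ofId_apply, aeval_eq_eval, MvPolynomial.algebraMap_eq]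

lemma le_height_kill {k : Type*} [Field k] {r : ℕ} :
    (r : ℕ∞) ≤ (RingHom.ker (killVars k r r)).height := by
  have hp : ∀ j, (RingHom.ker (killVars k r j)).IsPrime := fun j => RingHom.ker_isPrime _
  have he := PrimeSpectrum.height_eq_orderHeight
    (⟨RingHom.ker (killVars k r r), hp r⟩ : PrimeSpectrum (MvPolynomial (Fin r) k))
  refine le_of_le_of_eq ?_ he.symm
  let c : LTSeries (PrimeSpectrum (MvPolynomial (Fin r) k)) :=
    { length := r
      toFun := fun j => ⟨RingHom.ker (killVars k r j), hp j⟩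
      step := fun j => killVars_lt j.2 }
  exact Order.length_le_height (p := c) (le_of_eq rfl)

/-- **Multivariate Fundamental Theorem of Algebra.** If `f_1, ..., f_s` are nonconstant
homogeneous polynomials in `k[x_1, ..., x_r]` over an algebraically closed field `k` and
`r > s`, then the `f_i` have a common nonzero root. -/
theorem statement_0 {k : Type*} [Field k] [IsAlgClosed k] {r s : ℕ} (hrs : r > s)
    (f : Fin s → MvPolynomial (Fin r) k)
    (hhom : ∀ i, ∃ n : ℕ, (f i).IsHomogeneous n)
    (hnonconst : ∀ i, ∀ c : k, f i ≠ C c) :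
    ∃ γ : Fin r → k, γ ≠ 0 ∧ ∀ i, eval γ (f i) = 0 := by
  by_contra! hcon
  have h0 : ∀ i, eval 0 (f i) = 0 := by
    intro i
    obtain ⟨n, hn⟩ := hhom i
    have hn0 : n ≠ 0 := by
      rintro rfl
      exact hnonconst i _ (totalDegree_eq_zero_iff_eq_C.1 (by simpa using hn.totalDegree_le))
    have h := hn.coeff_eq_zero (d := 0) (by simpa using hn0.symm)
    rw [← constantCoeff_eq] at h
    simpa [constantCoeff_eq, eval_zero] using h
  set P := RingHom.ker (killVars k r r) with hP
  have : P.IsPrime := RingHom.ker_isPrime _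
  have hmem : ∀ p, p ∈ P ↔ eval 0 p = 0 := by
    intro p
    rw [hP, RingHom.mem_ker, killVars_last, C_eq_zero]
  have hmin : P ∈ (Ideal.span (Set.range f)).minimalPrimes := by
    refine ⟨⟨inferInstance, ?_⟩, ?_⟩
    · rw [Ideal.span_le]
      rintro _ ⟨i, rfl⟩
      exact (hmem _).2 (h0 i)
    · rintro Q ⟨hQ, hle⟩ - p hp
      rw [← hQ.radical]
      refine Ideal.radical_mono hle ?_
      rw [← vanishingIdeal_zeroLocus_eq_radical (K := k), mem_vanishingIdeal_iff]
      intro x hx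
      rw [mem_zeroLocus_iff] at hx
      have : x = 0 := by
        by_contra hx0
        obtain ⟨i, hi⟩ := hcon x hx0
        exact hi (by simpa [aeval_eq_eval] using hx _ (Ideal.subset_span ⟨i, rfl⟩))
      subst this
      simpa [aeval_eq_eval] using (hmem p).1 hp
  have h1 := Ideal.height_le_card_of_mem_minimalPrimes_span (Set.finite_range f) hmin
  have h2 : (r : ℕ∞) ≤ s := by
    refine (le_height_kill (k := k)).trans (h1.trans ?_)
    have h4 : (Set.range f).ncard ≤ s := by
      rw [← Set.image_univ]
      refine (Set.ncard_image_le Set.finite_univ).trans ?_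
      simp [Set.ncard_univ]
    exact_mod_cast h4
  have h3 : r ≤ s := by exact_mod_cast h2
  omega
end

section
/- Let k be an algebraically closed field and S = k[x_1,...,x_r] the polynomial ring in r variables over k. Let F be an S-module and d : F → F an S-linear map with d ∘ d = 0, and suppose the homology module ker(d)/im(d) is nonzero and finite-dimensional as a k-vector space. If F admits a free flag, i.e., a chain of S-submodules 0 = F^{-1} ⊆ F^0 ⊆ F^1 ⊆ ... ⊆ F^l = F such that each quotient F^i/F^{i-1} is a free S-module of finite rank and d(F^i) ⊆ F^{i-1} for all 0 ≤ i ≤ l, then l ≥ r. -/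
open MvPolynomial

/-- A monic polynomial in one variable is regular modulo polynomials in other variables. -/
lemma aux_regular {k : Type*} [Field k] {r : ℕ} (j : Fin r) (p : Polynomial k) (hp : p.Monic)
    (Y : Set (MvPolynomial (Fin r) k))
    (hY : ∀ y ∈ Y, ∃ i, i ≠ j ∧ ∃ q : Polynomial k, y = Polynomial.aeval (X i) q)
    (f : MvPolynomial (Fin r) k)
    (hf : Polynomial.aeval (X j : MvPolynomial (Fin r) k) p * f ∈ Ideal.span Y) :
    f ∈ Ideal.span Y := by
  classical
  let R := MvPolynomial {i : Fin r // i ≠ j} k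
  let φ : MvPolynomial (Fin r) k →ₐ[k] Polynomial R :=
    MvPolynomial.aeval (fun i => if h : i = j then Polynomial.X else Polynomial.C (X ⟨i, h⟩))
  let ρ : R →ₐ[k] MvPolynomial (Fin r) k := MvPolynomial.rename Subtype.val
  let ψ : Polynomial R →+* MvPolynomial (Fin r) k :=
    Polynomial.eval₂RingHom (ρ : R →+* MvPolynomial (Fin r) k) (X j)
  have hψφ : ∀ g, ψ (φ g) = g := by
    intro g
    have : (ψ.comp (φ : MvPolynomial (Fin r) k →+* Polynomial R)) = RingHom.id _ := by
      apply MvPolynomial.ringHom_ext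
      · intro c
        simp [φ, ψ, ρ, IsScalarTower.algebraMap_apply k R (Polynomial R)]
      · intro i
        by_cases h : i = j
        · subst h; simp [φ, ψ]
        · simp [φ, ψ, ρ, h]
          exact MvPolynomial.rename_X _ _
    exact RingHom.congr_fun this g
  have hφ1 : ∀ q : Polynomial k, φ (Polynomial.aeval (X j) q) = q.map (algebraMap k R) := by
    intro q
    rw [← Polynomial.aeval_algHom_apply]
    have : φ (X j) = Polynomial.X := by simp [φ]
    rw [this]
    exact Polynomial.aeval_X_left_eq_map q
  have hφ2 : ∀ i (h : i ≠ j) (q : Polynomial k),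
      φ (Polynomial.aeval (X i) q) = Polynomial.C (Polynomial.aeval (X ⟨i, h⟩ : R) q) := by
    intro i h q
    rw [← Polynomial.aeval_algHom_apply]
    have : φ (X i) = Polynomial.CAlgHom (R := k) (A := R) (X ⟨i, h⟩) := by simp [φ, h]
    rw [this, Polynomial.aeval_algHom_apply]
    rfl
  let J : Ideal R := Ideal.comap ρ (Ideal.span Y)
  have h1 : (Ideal.span Y).map φ ≤ J.map (Polynomial.C : R →+* Polynomial R) := by
    rw [Ideal.map_span, Ideal.span_le]
    rintro _ ⟨y, hy, rfl⟩
    obtain ⟨i, hi, q, rfl⟩ := hY y hy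
    rw [hφ2 i hi q]
    apply Ideal.mem_map_of_mem
    rw [Ideal.mem_comap, ← Polynomial.aeval_algHom_apply]
    have hρ : ρ (X ⟨i, hi⟩) = X i := MvPolynomial.rename_X _ _
    rw [hρ]
    exact Ideal.subset_span hy
  have h2 : (p.map (algebraMap k R)) * φ f ∈ J.map (Polynomial.C : R →+* Polynomial R) := by
    rw [← hφ1, ← map_mul]
    exact h1 (Ideal.mem_map_of_mem φ hf)
  have h3 : φ f ∈ J.map (Polynomial.C : R →+* Polynomial R) := by
    have hk : ∀ g : Polynomial R, g ∈ J.map (Polynomial.C : R →+* Polynomial R) ↔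
        g.map (Ideal.Quotient.mk J) = 0 := by
      intro g
      rw [Ideal.mem_map_C_iff, Polynomial.ext_iff]
      simp [Ideal.Quotient.eq_zero_iff_mem]
    rw [hk] at h2 ⊢
    rw [Polynomial.map_mul] at h2
    exact (((hp.map _).map (Ideal.Quotient.mk J)).mul_right_eq_zero_iff).1 h2
  have h4 : (J.map (Polynomial.C : R →+* Polynomial R)).map ψ ≤ Ideal.span Y := by
    rw [Ideal.map_map, Ideal.map_le_iff_le_comap]
    intro g hg
    have : ρ g ∈ Ideal.span Y := hg
    simpa [ψ] using this
  have := h4 (Ideal.mem_map_of_mem ψ h3)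
  rwa [hψφ] at this

section
variable {S F : Type*} [CommRing S] [AddCommGroup F] [Module S F]

lemma aux_reg_proj [Module.Projective S F] (I : Ideal S) (y : S)
    (h : ∀ f, y * f ∈ I → f ∈ I) (f : F) (hf : y • f ∈ I • (⊤ : Submodule S F)) :
    f ∈ I • (⊤ : Submodule S F) := by
  obtain ⟨s, hs⟩ := Module.projective_def'.1 (inferInstance : Module.Projective S F)
  have hc : ∀ p, s f p ∈ I := by
    intro p
    apply h
    have : (Finsupp.lapply p ∘ₗ s) (y • f) ∈ I := by
      have h1 := Submodule.mem_map_of_mem (f := Finsupp.lapply p ∘ₗ s) hf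
      rw [Submodule.map_smul''] at h1
      have h2 : I • Submodule.map (Finsupp.lapply p ∘ₗ s) ⊤ ≤ I := by
        have := Submodule.smul_mono (le_refl I)
          (le_top : Submodule.map (Finsupp.lapply p ∘ₗ s) (⊤ : Submodule S F) ≤ ⊤)
        simpa using this
      exact h2 h1
    simpa using this
  have : f = Finsupp.linearCombination S id (s f) := (LinearMap.congr_fun hs f).symm
  rw [this, Finsupp.linearCombination_apply, Finsupp.sum]
  exact Submodule.sum_mem _ fun p _ => Submodule.smul_mem_smul (hc p) trivial

lemma aux_mem (I : Ideal S) (y : S) (f : F) :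
    f ∈ (I ⊔ Ideal.span {y}) • (⊤ : Submodule S F) ↔
      ∃ i ∈ I • (⊤ : Submodule S F), ∃ n, f = i + y • n := by
  rw [Submodule.sup_smul, Submodule.mem_sup]
  simp only [Submodule.ideal_span_singleton_smul, Submodule.mem_smul_pointwise_iff_exists]
  constructor
  · rintro ⟨i, hi, _, ⟨n, -, rfl⟩, rfl⟩; exact ⟨i, hi, n, rfl⟩
  · rintro ⟨i, hi, n, rfl⟩; exact ⟨i, hi, _, ⟨n, trivial, rfl⟩, rfl⟩

lemma aux_map (I : Ideal S) (d : F →ₗ[S] F) {f : F} (hf : f ∈ I • (⊤ : Submodule S F)) :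
    d f ∈ I • (⊤ : Submodule S F) := by
  have h1 := Submodule.mem_map_of_mem (f := d) hf
  rw [Submodule.map_smul''] at h1
  exact Submodule.smul_mono (le_refl I) le_top h1

lemma aux_sq (d : F →ₗ[S] F) (I : Ideal S) (y p : S)
    (hy : ∀ f : F, y • f ∈ I • (⊤ : Submodule S F) → f ∈ I • (⊤ : Submodule S F))
    (hd2 : ∀ x, d (d x) = 0)
    (hp : ∀ a, d a ∈ I • (⊤ : Submodule S F) → ∃ b, p • a - d b ∈ I • (⊤ : Submodule S F))
    (c : F) (hc : d c ∈ (I ⊔ Ideal.span {y}) • (⊤ : Submodule S F)) :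
    ∃ b, (p ^ 2) • c - d b ∈ (I ⊔ Ideal.span {y}) • (⊤ : Submodule S F) := by
  obtain ⟨i, hi, n, hin⟩ := (aux_mem _ _ _).1 hc
  have hn : d n ∈ I • (⊤ : Submodule S F) := by
    apply hy
    have h : y • d n = - d i := by
      have := congrArg d hin
      rw [hd2, map_add, map_smul] at this
      exact eq_neg_of_add_eq_zero_right this.symm
    rw [h]
    exact Submodule.neg_mem _ (aux_map I d hi)
  obtain ⟨e, he⟩ := hp n hn
  obtain ⟨f, hf⟩ := hp (p • c - y • e) (by
    have : d (p • c - y • e) = p • i + y • (p • n - d e) := by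
      rw [map_sub, map_smul, map_smul, hin]; module
    rw [this]
    exact Submodule.add_mem _ (Submodule.smul_mem _ _ hi) (Submodule.smul_mem _ _ he))
  refine ⟨f, (aux_mem _ _ _).2 ⟨_, hf, p • e, ?_⟩⟩
  module

lemma aux_step (d : F →ₗ[S] F) (I : Ideal S) (y : S)
    (hy : ∀ f : F, y • f ∈ I • (⊤ : Submodule S F) → f ∈ I • (⊤ : Submodule S F))
    (hd2 : ∀ x, d (d x) = 0)
    (hp : ∀ a, d a ∈ I • (⊤ : Submodule S F) → ∃ b, y • a - d b ∈ I • (⊤ : Submodule S F))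
    (A B : Submodule S F) (hdAB : ∀ x ∈ A, d x ∈ B)
    (π : F →ₗ[S] F) (hπ1 : ∀ x, π x ∈ B) (hπ2 : ∀ x ∈ B, π x = x)
    (hA : ∀ c, d c ∈ (I ⊔ Ideal.span {y}) • (⊤ : Submodule S F) →
      ∃ a ∈ A, ∃ b, c - a - d b ∈ (I ⊔ Ideal.span {y}) • (⊤ : Submodule S F))
    (c : F) (hc : d c ∈ I • (⊤ : Submodule S F)) :
    ∃ a ∈ B, ∃ b, c - a - d b ∈ I • (⊤ : Submodule S F) := by
  obtain ⟨b, hb⟩ := hp c hc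
  obtain ⟨b', hb', b'', h⟩ := hA b ((aux_mem _ _ _).2
    ⟨-(y • c - d b), Submodule.neg_mem _ hb, c, by module⟩)
  obtain ⟨i, hi, a0, hia⟩ := (aux_mem _ _ _).1 h
  have h1 : y • c - d b' - y • d a0 ∈ I • (⊤ : Submodule S F) := by
    have e : d b - d b' = d i + y • d a0 := by
      have := congrArg d hia
      simpa [hd2] using this
    have e2 : y • c - d b' - y • d a0 = (y • c - d b) + d i := by
      have : d b = d i + y • d a0 + d b' := by rw [← e]; abel
      rw [this]; abel
    rw [e2]
    exact Submodule.add_mem _ hb (aux_map I d hi)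
  have h2 : π (y • c - d b' - y • d a0) ∈ I • (⊤ : Submodule S F) := aux_map I π h1
  refine ⟨π (c - d a0), hπ1 _, a0, hy _ ?_⟩
  have h3 : π (d b') = d b' := hπ2 _ (hdAB _ hb')
  have e3 : y • (c - π (c - d a0) - d a0) =
      (y • c - d b' - y • d a0) - π (y • c - d b' - y • d a0) := by
    simp only [map_sub, map_smul, h3]; module
  rw [e3]
  exact Submodule.sub_mem _ h1 h2

end

lemma aux_main {k : Type*} [Field k] {r : ℕ}
    {F : Type*} [AddCommGroup F] [Module (MvPolynomial (Fin r) k) F]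
    [Module.Projective (MvPolynomial (Fin r) k) F]
    (d : F →ₗ[MvPolynomial (Fin r) k] F) (hd2 : ∀ x, d (d x) = 0)
    (l : ℕ) (G : ℕ → Submodule (MvPolynomial (Fin r) k) F)
    (hGtop : G (l + 1) = ⊤)
    (hd : ∀ i, ∀ x ∈ G i, d x ∈ G (i - 1))
    (hπ : ∀ i ≤ l + 1, ∃ π : F →ₗ[MvPolynomial (Fin r) k] F,
      (∀ x, π x ∈ G i) ∧ ∀ x ∈ G i, π x = x)
    (T : Finset (Fin r)) : ∀ (Y : Set (MvPolynomial (Fin r) k))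
    (_ : ∀ y ∈ Y, ∃ i, i ∉ T ∧ ∃ q : Polynomial k, y = Polynomial.aeval (X i) q)
    (_ : ∀ j ∈ T, ∃ p : Polynomial k, p.Monic ∧
      ∀ a, d a ∈ Ideal.span Y • (⊤ : Submodule (MvPolynomial (Fin r) k) F) →
        ∃ b, (Polynomial.aeval (X j : MvPolynomial (Fin r) k) p) • a - d b ∈
          Ideal.span Y • (⊤ : Submodule (MvPolynomial (Fin r) k) F))
    (c : F) (_ : d c ∈ Ideal.span Y • (⊤ : Submodule (MvPolynomial (Fin r) k) F)),
    ∃ a ∈ G (l + 1 - T.card), ∃ b,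
      c - a - d b ∈ Ideal.span Y • (⊤ : Submodule (MvPolynomial (Fin r) k) F) := by
  classical
  induction T using Finset.induction_on with
  | empty =>
    intro Y _ _ c _
    exact ⟨c, by simp [hGtop], 0, by simp⟩
  | insert j T hj ih =>
    intro Y hY hp c hc
    obtain ⟨p, hpm, hpa⟩ := hp j (Finset.mem_insert_self _ _)
    set y : MvPolynomial (Fin r) k := Polynomial.aeval (X j) p with hydef
    have hreg : ∀ f : F, y • f ∈ Ideal.span Y • (⊤ : Submodule (MvPolynomial (Fin r) k) F) →
        f ∈ Ideal.span Y • (⊤ : Submodule (MvPolynomial (Fin r) k) F) := by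
      apply aux_reg_proj
      apply aux_regular j p hpm
      intro z hz
      obtain ⟨i, hi, q, hq⟩ := hY z hz
      exact ⟨i, fun h => hi (h ▸ Finset.mem_insert_self _ _), q, hq⟩
    have hspan : Ideal.span (insert y Y) = Ideal.span Y ⊔ Ideal.span {y} := by
      rw [Ideal.span_insert, sup_comm]
    have key := ih (insert y Y) (by
      rintro z (rfl | hz)
      · exact ⟨j, hj, p, rfl⟩
      · obtain ⟨i, hi, q, hq⟩ := hY z hz
        exact ⟨i, fun h => hi (Finset.mem_insert_of_mem h), q, hq⟩) (by
      intro i hi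
      obtain ⟨q, hqm, hqa⟩ := hp i (Finset.mem_insert_of_mem hi)
      refine ⟨q ^ 2, hqm.pow 2, ?_⟩
      rw [hspan, map_pow]
      exact aux_sq d _ y _ hreg hd2 hqa)
    rw [hspan] at key
    obtain ⟨π, hπ1, hπ2⟩ := hπ (l + 1 - (insert j T).card) (Nat.sub_le _ _)
    refine aux_step d _ y hreg hd2 hpa (G (l + 1 - T.card)) _ ?_ π hπ1 hπ2 key c hc
    intro x hx
    have := hd _ x hx
    rwa [Finset.card_insert_of_notMem hj, ← Nat.sub_sub]

section
variable {S F : Type*} [CommRing S] [AddCommGroup F] [Module S F]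

/-- A submodule with projective quotient is a retract. -/
lemma aux_retract (A B : Submodule S F) (hAB : A ≤ B)
    [Module.Projective S (B ⧸ A.comap B.subtype)] :
    ∃ ρ : B →ₗ[S] A, (∀ x : A, ρ ⟨x, hAB x.2⟩ = x) ∧
      ∃ σ : (B ⧸ A.comap B.subtype) →ₗ[S] B,
        ∀ x, Submodule.inclusion hAB (ρ x) + σ ((A.comap B.subtype).mkQ x) = x := by
  obtain ⟨σ, hσ⟩ := Module.projective_lifting_property (A.comap B.subtype).mkQ LinearMap.id
    (Submodule.mkQ_surjective _)
  have hmem : ∀ x : B, ((B.subtype ∘ₗ (LinearMap.id - σ ∘ₗ (A.comap B.subtype).mkQ)) x) ∈ A := by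
    intro x
    have : (x - σ ((A.comap B.subtype).mkQ x)) ∈ A.comap B.subtype := by
      rw [← Submodule.Quotient.mk_eq_zero, ← Submodule.mkQ_apply, map_sub, sub_eq_zero]
      exact (LinearMap.congr_fun hσ _).symm
    exact this
  refine ⟨LinearMap.codRestrict A _ hmem, ?_, σ, ?_⟩
  · intro x
    ext
    have : (A.comap B.subtype).mkQ ⟨x, hAB x.2⟩ = 0 := by
      rw [Submodule.mkQ_apply, Submodule.Quotient.mk_eq_zero]
      exact x.2
    simp only [LinearMap.codRestrict_apply, LinearMap.comp_apply, LinearMap.sub_apply, this]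
    simp
  · intro x
    ext
    simp

end

theorem statement_1 {k : Type*} [Field k] [IsAlgClosed k] {r : ℕ}
    (F : Type*) [AddCommGroup F] [Module (MvPolynomial (Fin r) k) F]
    [Module k F] [IsScalarTower k (MvPolynomial (Fin r) k) F]
    (d : F →ₗ[MvPolynomial (Fin r) k] F) (hd2 : d ∘ₗ d = 0)
    (hne : Nontrivial
      (↥(LinearMap.ker d) ⧸
        Submodule.comap (LinearMap.ker d).subtype (LinearMap.range d)))
    (hfin : FiniteDimensional k
      (↥(LinearMap.ker d) ⧸
        Submodule.comap (LinearMap.ker d).subtype (LinearMap.range d)))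
    (l : ℕ) (G : ℕ → Submodule (MvPolynomial (Fin r) k) F)
    (hG0 : G 0 = ⊥) (hGtop : G (l + 1) = ⊤)
    (hmono : ∀ i, G i ≤ G (i + 1))
    (hfree : ∀ i ≤ l,
      Module.Free (MvPolynomial (Fin r) k)
        (↥(G (i + 1)) ⧸ Submodule.comap (G (i + 1)).subtype (G i)) ∧
      Module.Finite (MvPolynomial (Fin r) k)
        (↥(G (i + 1)) ⧸ Submodule.comap (G (i + 1)).subtype (G i)))
    (hd : ∀ i, ∀ x ∈ G (i + 1), d x ∈ G i) :
    l ≥ r := by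
  by_contra hlr
  have hd2' : ∀ x, d (d x) = 0 := fun x => LinearMap.congr_fun hd2 x
  have hproj : ∀ n ≤ l + 1, Module.Projective (MvPolynomial (Fin r) k) (G n) := by
    intro n
    induction n with
    | zero =>
      intro _
      rw [hG0]; infer_instance
    | succ n ih =>
      intro hn
      have := ih (by omega)
      have := (hfree n (by omega)).1
      obtain ⟨ρ, -, σ, hσ⟩ := aux_retract (G n) (G (n + 1)) (hmono n)
      refine Module.Projective.of_split
        (ρ.prod (Submodule.comap (G (n + 1)).subtype (G n)).mkQ)
        ((Submodule.inclusion (hmono n)).coprod σ) ?_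
      ext x
      exact congrArg Subtype.val (hσ x)
  have hF : Module.Projective (MvPolynomial (Fin r) k) F := by
    have := hproj (l + 1) le_rfl
    rw [hGtop] at this
    exact Module.Projective.of_equiv Submodule.topEquiv
  have hπ : ∀ m n, n + m = l + 1 → ∃ π : F →ₗ[MvPolynomial (Fin r) k] F,
      (∀ x, π x ∈ G n) ∧ ∀ x ∈ G n, π x = x := by
    intro m
    induction m with
    | zero =>
      intro n hn
      obtain rfl : n = l + 1 := by omega
      exact ⟨LinearMap.id, by simp [hGtop], by simp⟩
    | succ m ih =>
      intro n hn
      obtain ⟨π, h1, h2⟩ := ih (n + 1) (by omega)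
      have := (hfree n (by omega)).1
      obtain ⟨ρ, hρ, -⟩ := aux_retract (G n) (G (n + 1)) (hmono n)
      refine ⟨(G n).subtype ∘ₗ ρ ∘ₗ LinearMap.codRestrict _ π h1, fun x => ?_, fun x hx => ?_⟩
      · exact (ρ _).2
      · have e : LinearMap.codRestrict (G (n + 1)) π h1 x = ⟨x, hmono n hx⟩ := by
          ext; exact h2 x (hmono n hx)
        simp only [LinearMap.comp_apply, e]
        exact congrArg Subtype.val (hρ ⟨x, hx⟩)
  have key := aux_main d hd2' l G hGtop (by
    intro i x hx
    cases i with
    | zero =>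
      have : x = 0 := by simpa [hG0] using hx
      simp [this]
    | succ i => exact hd i x hx) (fun i hi => hπ (l + 1 - i) i (by omega)) Finset.univ ∅
    (by simp) (by
      intro j _
      let H := (↥(LinearMap.ker d) ⧸
        Submodule.comap (LinearMap.ker d).subtype (LinearMap.range d))
      let φ : MvPolynomial (Fin r) k →ₐ[k] Module.End k H := Algebra.lsmul k k H
      have hint : IsIntegral k (φ (X j)) := Algebra.IsIntegral.isIntegral _
      refine ⟨minpoly k (φ (X j)), minpoly.monic hint, ?_⟩
      intro a ha
      have ha' : d a = 0 := by simpa using ha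
      have h0 : φ (Polynomial.aeval (X j) (minpoly k (φ (X j)))) = 0 := by
        rw [← Polynomial.aeval_algHom_apply, minpoly.aeval]
      have h1 := LinearMap.congr_fun h0 (Submodule.Quotient.mk ⟨a, ha'⟩)
      have h2 : (Submodule.Quotient.mk
          ((Polynomial.aeval (X j : MvPolynomial (Fin r) k) (minpoly k (φ (X j)))) •
            (⟨a, ha'⟩ : LinearMap.ker d)) : H) = 0 := h1
      rw [Submodule.Quotient.mk_eq_zero] at h2
      obtain ⟨b, hb⟩ := h2
      refine ⟨b, ?_⟩
      rw [hb]
      simp)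
  obtain ⟨z, hz⟩ := exists_ne (0 : ↥(LinearMap.ker d) ⧸
        Submodule.comap (LinearMap.ker d).subtype (LinearMap.range d))
  obtain ⟨⟨c, hc⟩, rfl⟩ := Submodule.Quotient.mk_surjective _ z
  apply hz
  rw [Submodule.Quotient.mk_eq_zero]
  have hc' : d c = 0 := hc
  obtain ⟨a, ha, b, hb⟩ := key c (by simp [hc'])
  have h0 : l + 1 - (Finset.univ : Finset (Fin r)).card = 0 := by simp; omega
  rw [h0, hG0, Submodule.mem_bot] at ha
  subst ha
  refine ⟨b, ?_⟩
  have : c - d b = 0 := by simpa using hb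
  exact (sub_eq_zero.1 this).symm
end

section
/- Let k be an algebraically closed field, S = k[x_1,...,x_r] the polynomial ring in r variables each of degree 1, and let R, C be positive integers. Suppose D = (p_{ij}) is an 8×8 matrix with entries in S such that: (1) D is strictly upper triangular; (2) D² = 0; (3) p_{ij}(0,...,0) = 0 for all i, j; (4) for every (a_1,...,a_r) ∈ k^r \ {(0,...,0)}, the evaluated matrix D(a_1,...,a_r) over k has rank 4; (5) there exists a nonincreasing 8-tuple of integers (d_1,...,d_8) such that each p_{ij} is a homogeneous polynomial of degree d_i - d_j + 1; (6) p_{ij} = 0 whenever j ≤ C or i ≥ 9 - R. Then 8 ≥ 2^{r-1}(R + C). -/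
open MvPolynomial

/-- The "standard conditions" on an `8 × 8` matrix `D = (p_{ij})` with entries in
`S = k[x_1, ..., x_r]`:
(1) `D` is strictly upper triangular;
(2) `D² = 0`;
(3) every entry vanishes at the origin;
(4) for every nonzero point `a ∈ k^r` the evaluated matrix `D(a)` has rank `4`;
(5) there is a nonincreasing `8`-tuple of integers `(d_1, ..., d_8)` such that each `p_{ij}`
is homogeneous of degree `d_i - d_j + 1` (the zero polynomial being homogeneous of
any degree). -/
def StandardConditions {k : Type*} [Field k] {r : ℕ}
    (D : Matrix (Fin 8) (Fin 8) (MvPolynomial (Fin r) k)) : Prop :=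
  (∀ i j : Fin 8, j ≤ i → D i j = 0) ∧
  D * D = 0 ∧
  (∀ i j : Fin 8, eval (0 : Fin r → k) (D i j) = 0) ∧
  (∀ a : Fin r → k, a ≠ 0 → (D.map (eval a)).rank = 4) ∧
  (∃ d : Fin 8 → ℤ, Antitone d ∧
    ∀ i j : Fin 8, D i j = 0 ∨
      (0 ≤ d i - d j + 1 ∧ (D i j).IsHomogeneous (d i - d j + 1).toNat))

section LA
variable {k : Type*} [Field k]

theorem la_ker (M : Matrix (Fin 8) (Fin 8) k) (h2 : M * M = 0) (hr : M.rank = 4) :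
    LinearMap.ker M.mulVecLin = LinearMap.range M.mulVecLin := by
  symm
  apply Submodule.eq_of_le_of_finrank_eq
  · rintro _ ⟨y, rfl⟩
    simp [h2]
  · have h := M.mulVecLin.finrank_range_add_finrank_ker
    have h' : Module.finrank k (LinearMap.range M.mulVecLin) = 4 := hr
    simp at h
    omega

theorem la1 (M : Matrix (Fin 8) (Fin 8) k) (h2 : M * M = 0) (hr : M.rank = 4)
    (w : Fin 8 → k) (hw : M.mulVec w = 0) : ∃ y, M.mulVec y = w := by
  have : w ∈ LinearMap.ker M.mulVecLin := hw
  rw [la_ker M h2 hr] at this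
  exact this

theorem la_ginv {n m : ℕ} (M : Matrix (Fin n) (Fin m) k) : ∃ V : Matrix (Fin m) (Fin n) k, M * V * M = M := by
  let f := Matrix.toLin' M
  obtain ⟨g, hg⟩ := f.rangeRestrict.exists_rightInverse_of_surjective (LinearMap.range_rangeRestrict f)
  obtain ⟨p, hp⟩ := (LinearMap.range f).exists_isCompl
  let π := (LinearMap.range f).projectionOnto p hp
  refine ⟨LinearMap.toMatrix' (g ∘ₗ π), ?_⟩
  apply Matrix.toLin'.injective
  rw [Matrix.toLin'_mul, Matrix.toLin'_mul, Matrix.toLin'_toMatrix']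
  ext1 x
  ext1
  have h1 : π (f (Pi.single x 1)) = f.rangeRestrict (Pi.single x 1) :=
    Submodule.projectionOnto_apply_left hp (f.rangeRestrict (Pi.single x 1))
  have h2 := LinearMap.congr_fun hg (f.rangeRestrict (Pi.single x 1))
  have h3 := congrArg Subtype.val h2
  change f (g (π (f (Pi.single x 1)))) = f (Pi.single x 1)
  rw [h1]
  exact h3

theorem la2 (M : Matrix (Fin 8) (Fin 8) k) (h2 : M * M = 0) (hr : M.rank = 4) :
    ∃ V : Matrix (Fin 8) (Fin 8) k, (M * V + V * M).det ≠ 0 := by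
  obtain ⟨V, hV⟩ := la_ginv M
  refine ⟨V, fun h0 => ?_⟩
  obtain ⟨x, hx, hx0⟩ := Matrix.exists_mulVec_eq_zero_iff.mpr h0
  have h1 : M.mulVec x = 0 := by
    have : (M * (M * V + V * M)).mulVec x = 0 := by
      rw [← Matrix.mulVec_mulVec, hx0, Matrix.mulVec_zero]
    rwa [mul_add, ← mul_assoc, h2, zero_mul, zero_add, ← mul_assoc, hV] at this
  obtain ⟨y, rfl⟩ := la1 M h2 hr x h1
  apply hx
  rw [Matrix.mulVec_mulVec, add_mul, mul_assoc V, h2, mul_zero, add_zero, hV] at hx0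
  exact hx0

open Classical in
theorem rank_le_nzcols {n m : ℕ} (M : Matrix (Fin n) (Fin m) k) (s : Finset (Fin m))
    (h : ∀ j ∉ s, ∀ i, M i j = 0) : M.rank ≤ s.card := by
  rw [Matrix.rank_eq_finrank_span_cols]
  have : Submodule.span k (Set.range M.col) ≤ Submodule.span k ((s.image M.col : Finset _) : Set (Fin n → k)) := by
    rw [Submodule.span_le]
    rintro _ ⟨j, rfl⟩
    by_cases hj : j ∈ s
    · apply Submodule.subset_span
      simp only [Finset.coe_image]
      exact ⟨j, hj, rfl⟩
    · have : M.col j = 0 := by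
        ext i; exact h j hj i
      rw [this]; exact Submodule.zero_mem _

  calc _ ≤ _ := Submodule.finrank_mono this
    _ ≤ (s.image M.col).card := finrank_span_finset_le_card _
    _ ≤ _ := Finset.card_image_le

theorem rank_le_nzrows {n m : ℕ} (M : Matrix (Fin n) (Fin m) k) (s : Finset (Fin n))
    (h : ∀ i ∉ s, ∀ j, M i j = 0) : M.rank ≤ s.card := by
  rw [← Matrix.rank_transpose]
  exact rank_le_nzcols _ s (fun j hj i => h j hj i)
end LA

section NS
variable {k : Type*} [Field k] [IsAlgClosed k] {r : ℕ}

theorem ns (I : Ideal (MvPolynomial (Fin r) k))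
    (h : ∀ a : Fin r → k, a ≠ 0 → ∃ f ∈ I, eval a f ≠ 0) :
    ∃ m : ℕ, ∀ s, (X s : MvPolynomial (Fin r) k) ^ m ∈ I := by
  have h1 : ∀ s, (X s : MvPolynomial (Fin r) k) ∈ I.radical := by
    intro s
    rw [← MvPolynomial.vanishingIdeal_zeroLocus_eq_radical (K := k), mem_vanishingIdeal_iff]
    intro a ha
    rw [mem_zeroLocus_iff] at ha
    by_cases h0 : a = 0
    · simp [h0]
    · obtain ⟨f, hf, hne⟩ := h a h0
      exact absurd (by simpa [aeval_eq_eval] using ha f hf) hne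
  choose n hn using h1
  refine ⟨∑ s, n s, fun s => ?_⟩
  rw [← Finset.add_sum_erase _ _ (Finset.mem_univ s), pow_add]
  exact I.mul_mem_right _ (hn s)

/-- a polynomial vanishing at all nonzero points is zero -/
theorem poly_zero (hr : 0 < r) (f : MvPolynomial (Fin r) k) (h : ∀ a : Fin r → k, a ≠ 0 → eval a f = 0) : f = 0 := by
  have : f * X ⟨0, hr⟩ = 0 := by
    apply MvPolynomial.funext
    intro a
    by_cases h0 : a = 0
    · simp [h0]
    · simp [h a h0]
  rcases mul_eq_zero.mp this with h | h
  · exact h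
  · exact absurd h (X_ne_zero _)

theorem ev_mulVec {n m : ℕ} (D : Matrix (Fin n) (Fin m) (MvPolynomial (Fin r) k)) (u : Fin m → MvPolynomial (Fin r) k) (a : Fin r → k) :
    (D.map (eval a)).mulVec (fun j => eval a (u j)) = fun i => eval a (D.mulVec u i) := by
  ext i
  simp [Matrix.mulVec, dotProduct]

theorem ann (D : Matrix (Fin 8) (Fin 8) (MvPolynomial (Fin r) k)) (h2 : D * D = 0)
    (h4 : ∀ a : Fin r → k, a ≠ 0 → (D.map (eval a)).rank = 4)
    (z : Fin 8 → MvPolynomial (Fin r) k) (hz : D.mulVec z = 0) :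
    ∃ m : ℕ, ∀ s, ∃ u, D.mulVec u = (X s ^ m : MvPolynomial (Fin r) k) • z := by
  let I : Ideal (MvPolynomial (Fin r) k) :=
    (LinearMap.range D.mulVecLin).comap (LinearMap.toSpanSingleton _ _ z)
  obtain ⟨m, hm⟩ := ns I (by
    intro a ha
    have e2 : D.map (eval a) * D.map (eval a) = 0 := by
      rw [← Matrix.map_mul, h2]; ext; simp
    obtain ⟨V, hV⟩ := la2 _ e2 (h4 a ha)
    let W : Matrix (Fin 8) (Fin 8) (MvPolynomial (Fin r) k) := V.map C
    let N := D * W + W * D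
    have hW : W.map (eval a) = V := by ext; simp [W]
    have hdet : eval a N.det ≠ 0 := by
      rw [RingHom.map_det]
      simp only [RingHom.mapMatrix_apply, N]
      rw [Matrix.map_add _ (by simp), Matrix.map_mul, Matrix.map_mul, hW]
      exact hV
    refine ⟨N.det, ?_, hdet⟩
    have hN0 : N.det ≠ 0 := by intro h; rw [h] at hdet; simp at hdet
    have hc : D * N = N * D := by
      simp only [N, mul_add, add_mul]
      rw [← mul_assoc, h2, zero_mul, mul_assoc W, h2, mul_zero, zero_add, add_zero, mul_assoc]
    have hadj : D * N.adjugate = N.adjugate * D := by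
      have h1 : N.det • N.det • (D * N.adjugate) = N.det • N.det • (N.adjugate * D) := by
        have e1 : N.adjugate * (N * D) * N.adjugate = N.adjugate * (D * N) * N.adjugate := by rw [hc]
        have e2 : N.adjugate * (N * D) * N.adjugate = N.det • (D * N.adjugate) := by
          rw [← mul_assoc, Matrix.adjugate_mul, Matrix.smul_mul, Matrix.smul_mul, one_mul]
        have e3 : N.adjugate * (D * N) * N.adjugate = N.det • (N.adjugate * D) := by
          rw [mul_assoc, mul_assoc D, Matrix.mul_adjugate, Matrix.mul_smul, Matrix.mul_smul, mul_one]
        rw [← e2, e1, e3]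
      exact smul_right_injective _ hN0 (smul_right_injective _ hN0 h1)
    refine ⟨(N.adjugate * W).mulVec z, ?_⟩
    rw [LinearMap.toSpanSingleton_apply, Matrix.mulVecLin_apply, Matrix.mulVec_mulVec, ← mul_assoc, hadj]
    have : (N.adjugate * N).mulVec z = N.det • z := by
      rw [Matrix.adjugate_mul, Matrix.smul_mulVec, Matrix.one_mulVec]
    rw [← this]
    simp only [N, mul_add, Matrix.add_mulVec, ← mul_assoc]
    rw [← Matrix.mulVec_mulVec z _ D, hz, Matrix.mulVec_zero, add_zero])
  refine ⟨m, fun s => ?_⟩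
  obtain ⟨u, hu⟩ := hm s
  exact ⟨u, hu⟩
end NS

section Hom
variable {k : Type*} [Field k] {r : ℕ}

noncomputable def hc (n : ℤ) : MvPolynomial (Fin r) k →ₗ[k] MvPolynomial (Fin r) k :=
  if 0 ≤ n then homogeneousComponent n.toNat else 0

def HomZ (p : MvPolynomial (Fin r) k) (c : ℤ) : Prop := p = 0 ∨ (0 ≤ c ∧ p.IsHomogeneous c.toNat)

theorem hc_mul (p f : MvPolynomial (Fin r) k) (c n : ℤ) (hp : HomZ p c) :
    p * hc n f = hc (n + c) (p * f) := by
  rcases hp with rfl | ⟨hc0, hp⟩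
  · simp
  let _ : GradedRing (homogeneousSubmodule (Fin r) k) := gradedAlgebra
  have hp' : p ∈ homogeneousSubmodule (Fin r) k c.toNat := hp
  have key : ∀ (g : MvPolynomial (Fin r) k) (i : ℕ), ((DirectSum.decompose (homogeneousSubmodule (Fin r) k) g i :
    homogeneousSubmodule (Fin r) k i) : MvPolynomial (Fin r) k) = homogeneousComponent i g :=
    fun g i => decomposition.decompose'_apply g i
  unfold hc
  by_cases hn : 0 ≤ n
  · rw [if_pos hn, if_pos (by omega), Int.toNat_add hn hc0]
    have := DirectSum.coe_decompose_mul_of_left_mem_of_le (homogeneousSubmodule (Fin r) k) (a := p) (b := f) (n := n.toNat + c.toNat) hp' (by omega)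
    rw [Nat.add_sub_cancel] at this
    rw [← key, ← key]; exact this.symm
  · rw [if_neg hn]
    by_cases hnc : 0 ≤ n + c
    · rw [if_pos hnc]
      have := DirectSum.coe_decompose_mul_of_left_mem_of_not_le (homogeneousSubmodule (Fin r) k) (a := p) (b := f) (n := (n+c).toNat) hp' (by omega)
      rw [LinearMap.zero_apply, mul_zero]
      rw [← key]; exact this.symm
    · rw [if_neg hnc]; simp

theorem hc_homZ (n : ℤ) (f : MvPolynomial (Fin r) k) : HomZ (hc n f) n := by
  unfold hc HomZ
  by_cases hn : 0 ≤ n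
  · rw [if_pos hn]
    exact Or.inr ⟨hn, homogeneousComponent_isHomogeneous _ _⟩
  · rw [if_neg hn]; left; rfl

theorem hc_self (n : ℤ) (f : MvPolynomial (Fin r) k) (h : HomZ f n) : hc n f = f := by
  rcases h with rfl | ⟨h0, h⟩
  · simp
  · unfold hc
    rw [if_pos h0, homogeneousComponent_of_mem h, if_pos rfl]

theorem hom_solve (D : Matrix (Fin 8) (Fin 8) (MvPolynomial (Fin r) k)) (d : Fin 8 → ℤ)
    (hh : ∀ i j, HomZ (D i j) (d i - d j + 1)) (i : Fin 8) (s : Fin r) (m : ℕ) (u : Fin 8 → MvPolynomial (Fin r) k)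
    (hu : D.mulVec u = (X s ^ m : MvPolynomial (Fin r) k) • Pi.single i 1) :
    ∃ u', D.mulVec u' = (X s ^ m : MvPolynomial (Fin r) k) • Pi.single i 1 ∧
      ∀ j, HomZ (u' j) (m + d j - d i - 1) := by
  refine ⟨fun j => hc (m + d j - d i - 1) (u j), ?_, fun j => hc_homZ _ _⟩
  ext1 l
  have h1 := congrFun hu l
  simp only [Matrix.mulVec, dotProduct] at h1 ⊢
  have : ∀ j, D l j * hc (m + d j - d i - 1) (u j) = hc (m + d l - d i) (D l j * u j) := by
    intro j
    rw [hc_mul _ _ _ _ (hh l j)]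
    congr 2; ring
  simp only [this]
  rw [← map_sum, h1]
  by_cases hl : l = i
  · subst hl
    simp only [Pi.smul_apply, Pi.single_eq_same, smul_eq_mul, mul_one]
    apply hc_self
    right
    refine ⟨by omega, ?_⟩
    have : (↑m + d l - d l).toNat = m := by omega
    rw [this]
    exact isHomogeneous_X_pow s m
  · simp [hl]

structure Gd (D : Matrix (Fin 8) (Fin 8) (MvPolynomial (Fin r) k)) (d : Fin 8 → ℤ) : Prop where
  h2 : D * D = 0
  h0 : ∀ i j, eval (0 : Fin r → k) (D i j) = 0
  h4 : ∀ a : Fin r → k, a ≠ 0 → (D.map (eval a)).rank = 4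
  hh : ∀ i j, HomZ (D i j) (d i - d j + 1)

theorem Gd.e2 {D : Matrix (Fin 8) (Fin 8) (MvPolynomial (Fin r) k)} {d : Fin 8 → ℤ} (h : Gd D d) (a : Fin r → k) :
    D.map (eval a) * D.map (eval a) = 0 := by
  rw [← Matrix.map_mul, h.h2]; ext; simp

theorem X_not_dvd {s t : Fin r} (h : s ≠ t) (m : ℕ) : ¬ (X s : MvPolynomial (Fin r) k) ∣ X t ^ m := by
  rintro ⟨q, hq⟩
  have := congrArg (eval (Pi.single t (1:k))) hq
  simp [h] at this

theorem gcd_X {s t : Fin r} (h : s ≠ t) (m n : ℕ) (f g : MvPolynomial (Fin r) k) (hfg : X t ^ m * f = X s ^ n * g) :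
    X s ^ n ∣ f :=
  (X_prime (R := k) (i := s)).pow_dvd_of_dvd_mul_left _ (X_not_dvd h m) (Dvd.intro _ hfg.symm)

variable [IsAlgClosed k]

theorem Gd.row0 {D : Matrix (Fin 8) (Fin 8) (MvPolynomial (Fin r) k)} {d : Fin 8 → ℤ} (h : Gd D d) (a : Fin r → k) (ha : a ≠ 0)
    (l : Fin 8) (hl : ∀ j, D l j = 0) (w : Fin 8 → k) (hw : (D.map (eval a)).mulVec w = 0) : w l = 0 := by
  obtain ⟨y, rfl⟩ := la1 _ (h.e2 a) (h.h4 a ha) w hw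
  simp [Matrix.mulVec, dotProduct, hl]

theorem Gd.row0' {D : Matrix (Fin 8) (Fin 8) (MvPolynomial (Fin r) k)} {d : Fin 8 → ℤ} (h : Gd D d) (hr : 0 < r)
    (l : Fin 8) (hl : ∀ j, D l j = 0) (w : Fin 8 → MvPolynomial (Fin r) k) (hw : D.mulVec w = 0) : w l = 0 := by
  apply poly_zero hr
  intro a ha
  refine h.row0 a ha l hl (fun j => eval a (w j)) ?_
  rw [ev_mulVec, hw]; ext; simp

theorem Gd.G {D : Matrix (Fin 8) (Fin 8) (MvPolynomial (Fin r) k)} {d : Fin 8 → ℤ} (h : Gd D d) (hr : 2 ≤ r)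
    (i : Fin 8) (hi : ∀ j, D j i = 0) (L : Set (Fin 8)) (hL : ∀ l ∈ L, ∀ j, D l j = 0) (hd : ∀ l ∈ L, d l ≤ d i)
    (a : Fin r → k) (ha : a ≠ 0) : ∃ w, (∀ l ∈ L, w l = 0) ∧ (D.map (eval a)).mulVec w = Pi.single i 1 := by
  obtain ⟨s, hs⟩ : ∃ s, a s ≠ 0 := by
    by_contra hcon
    push Not at hcon
    exact ha (funext hcon)
  obtain ⟨t, ht⟩ : ∃ t : Fin r, s ≠ t := by
    by_cases h0 : s.val = 0
    · exact ⟨⟨1, by omega⟩, fun e => by rw [e] at h0; simp at h0⟩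
    · exact ⟨⟨0, by omega⟩, fun e => by rw [e] at h0; simp at h0⟩
  have hz : D.mulVec (Pi.single i 1) = 0 := by
    ext1 j; simp [hi]
  obtain ⟨m, hm⟩ := ann D h.h2 h.h4 _ hz
  obtain ⟨u0, hu0⟩ := hm s
  obtain ⟨u', hu'⟩ := hm t
  obtain ⟨u, hu, hdeg⟩ := hom_solve D d h.hh i s m u0 hu0
  have hul : ∀ l ∈ L, u l = 0 := by
    intro l hl
    have h1 : D.mulVec ((X t ^ m : MvPolynomial (Fin r) k) • u - (X s ^ m : MvPolynomial (Fin r) k) • u') = 0 := by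
      rw [Matrix.mulVec_sub, Matrix.mulVec_smul, Matrix.mulVec_smul, hu, hu', smul_smul, smul_smul, mul_comm, sub_self]
    have h2 := h.row0' (by omega) l (hL l hl) _ h1
    have h3 : X t ^ m * u l = X s ^ m * u' l := by
      simpa [sub_eq_zero] using h2
    obtain ⟨q, hq⟩ := gcd_X ht m m _ _ h3
    by_contra hne
    rcases hdeg l with h5 | ⟨h5, h6⟩
    · exact hne h5
    have h7 := h6.totalDegree hne
    have hq0 : q ≠ 0 := by rintro rfl; simp at hq; exact hne hq
    rw [hq, totalDegree_mul_of_isDomain (pow_ne_zero _ (X_ne_zero s)) hq0, totalDegree_X_pow] at h7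
    have := hd l hl
    omega
  refine ⟨fun j => (a s ^ m)⁻¹ * eval a (u j), fun l hl => by simp [hul l hl], ?_⟩
  have h8 := ev_mulVec D u a
  rw [hu] at h8
  have h9 : (D.map (eval a)).mulVec ((a s ^ m)⁻¹ • fun j => eval a (u j)) = Pi.single i 1 := by
    rw [Matrix.mulVec_smul, h8]
    ext j
    by_cases hj : j = i
    · subst hj; simp [hs]
    · simp [hj]
  exact h9
end Hom

section Bas
variable {k : Type*} [Field k] [IsAlgClosed k] {r : ℕ}

theorem Gd.indep {D : Matrix (Fin 8) (Fin 8) (MvPolynomial (Fin r) k)} {d : Fin 8 → ℤ} (h : Gd D d) (hr : 2 ≤ r)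
    {m n : ℕ} (c : Fin m → Fin 8) (hc : Function.Injective c) (l : Fin n → Fin 8) (hl : Function.Injective l)
    (hc0 : ∀ i j, D j (c i) = 0) (hl0 : ∀ i j, D (l i) j = 0) (hd : ∀ i j, d (l i) ≤ d (c j))
    (a : Fin r → k) (ha : a ≠ 0) (α : Fin m → k) (β : Fin n → k)
    (hs : ∑ i, α i • (Pi.single (c i) 1 : Fin 8 → k) + (∑ j, β j • (D.map (eval a)).col (l j)) = 0) :
    α = 0 ∧ β = 0 := by
  have hw : ∀ i, ∃ w, (∀ q ∈ Set.range l, w q = 0) ∧ (D.map (eval a)).mulVec w = Pi.single (c i) 1 := by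
    intro i
    apply h.G hr _ (hc0 i) _ _ _ a ha
    · rintro _ ⟨j, rfl⟩; exact hl0 j
    · rintro _ ⟨j, rfl⟩; exact hd j i
  choose w hw0 hw using hw
  have hcol : ∀ j, (D.map (eval a)).col (l j) = (D.map (eval a)).mulVec (Pi.single (l j) 1) := by
    intro j; simp
  have hb : β = 0 := by
    have h1 : (D.map (eval a)).mulVec (∑ i, α i • w i + ∑ j, β j • Pi.single (l j) 1) = 0 := by
      rw [Matrix.mulVec_add, Matrix.mulVec_sum, Matrix.mulVec_sum]
      simp only [Matrix.mulVec_smul, hw, ← hcol]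
      exact hs
    ext q
    have h2 := h.row0 a ha (l q) (hl0 q) _ h1
    simp only [Pi.add_apply, Finset.sum_apply, Pi.smul_apply, hw0 _ _ (Set.mem_range_self q)] at h2
    simp only [smul_zero, Finset.sum_const_zero, zero_add, Pi.single_apply, hl.eq_iff] at h2
    simpa using h2
  refine ⟨?_, hb⟩
  subst hb
  ext q
  have := congrFun hs (c q)
  simpa [Pi.single_apply, hc.eq_iff] using this

theorem Gd.card {D : Matrix (Fin 8) (Fin 8) (MvPolynomial (Fin r) k)} {d : Fin 8 → ℤ} (h : Gd D d) (hr : 2 ≤ r)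
    {m n : ℕ} (c : Fin m → Fin 8) (hc : Function.Injective c) (l : Fin n → Fin 8) (hl : Function.Injective l)
    (hc0 : ∀ i j, D j (c i) = 0) (hl0 : ∀ i j, D (l i) j = 0) (hd : ∀ i j, d (l i) ≤ d (c j)) : m + n ≤ 4 := by
  have ha : (fun _ => 1 : Fin r → k) ≠ 0 := by
    intro h; have := congrFun h ⟨0, by omega⟩; simp at this
  set a := (fun _ => 1 : Fin r → k)
  have hli : LinearIndependent k (Sum.elim (fun i => (Pi.single (c i) 1 : Fin 8 → k)) (fun j => (D.map (eval a)).col (l j))) := by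
    rw [Fintype.linearIndependent_iff]
    intro g hg
    rw [Fintype.sum_sum_type] at hg
    have := h.indep hr c hc l hl hc0 hl0 hd a ha (fun i => g (Sum.inl i)) (fun i => g (Sum.inr i)) hg
    rintro (i | i)
    · exact congrFun this.1 i
    · exact congrFun this.2 i
  have h1 := finrank_span_eq_card hli
  have h2 : Submodule.span k (Set.range (Sum.elim (fun i => (Pi.single (c i) 1 : Fin 8 → k)) (fun j => (D.map (eval a)).col (l j)))) ≤ LinearMap.range (D.map (eval a)).mulVecLin := by
    rw [Submodule.span_le]
    rintro _ ⟨i | j, rfl⟩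
    · obtain ⟨w, -, hw⟩ := h.G hr _ (hc0 i) ∅ (by simp) (by simp) a ha
      exact ⟨w, hw⟩
    · exact ⟨Pi.single (l j) 1, by simp⟩
  have h3 := Submodule.finrank_mono h2
  have h4 : Module.finrank k (LinearMap.range (D.map (eval a)).mulVecLin) = 4 := h.h4 a ha
  simp at h1
  omega

theorem Gd.basis {D : Matrix (Fin 8) (Fin 8) (MvPolynomial (Fin r) k)} {d : Fin 8 → ℤ} (h : Gd D d) (hr : 2 ≤ r)
    (Z : Matrix (Fin 8) (Fin 4) (MvPolynomial (Fin r) k)) (hZ : D * Z = 0)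
    (hi : ∀ a : Fin r → k, a ≠ 0 → ∀ c, (Z.map (eval a)).mulVec c = 0 → c = 0)
    (y : Fin 8 → MvPolynomial (Fin r) k) (hy : D.mulVec y = 0) : ∃ c, y = Z.mulVec c := by
  have hinj : ∀ c, Z.mulVec c = 0 → c = 0 := by
    intro c hc
    ext1 i
    apply poly_zero (by omega)
    intro a ha
    have := hi a ha (fun i => eval a (c i)) (by rw [ev_mulVec, hc]; ext; simp)
    exact congrFun this i
  let I : Ideal (MvPolynomial (Fin r) k) :=
    (LinearMap.range Z.mulVecLin).comap (LinearMap.toSpanSingleton _ _ y)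
  obtain ⟨m, hm⟩ := ns I (by
    intro a ha
    obtain ⟨V, hV⟩ := la_ginv (Z.map (eval a))
    have hVZ : V * Z.map (eval a) = 1 := by
      apply Matrix.toLin'.injective
      ext1 x
      ext1
      rw [← sub_eq_zero]
      apply hi a ha
      simp only [LinearMap.comp_apply, Matrix.toLin'_apply, Matrix.mulVec_sub, Matrix.mulVec_mulVec]
      rw [← Matrix.mul_assoc, hV, Matrix.mul_one, sub_self]
    let W : Matrix (Fin 4) (Fin 8) (MvPolynomial (Fin r) k) := V.map C
    have hW : ∀ b, W.map (eval b) = V := by intro b; ext; simp [W]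
    let N := W * Z
    have hdet : eval a N.det ≠ 0 := by
      rw [RingHom.map_det]
      simp only [RingHom.mapMatrix_apply, N]
      rw [Matrix.map_mul, hW, hVZ]
      simp
    have hN0 : N.det ≠ 0 := by intro h; rw [h] at hdet; simp at hdet
    refine ⟨N.det, ?_, hdet⟩
    let y' := N.det • y - Z.mulVec ((N.adjugate * W).mulVec y)
    have hWy' : W.mulVec y' = 0 := by
      simp only [y', Matrix.mulVec_sub, Matrix.mulVec_smul, Matrix.mulVec_mulVec]
      have : W * (Z * (N.adjugate * W)) = N.det • W := by
        rw [← Matrix.mul_assoc, ← Matrix.mul_assoc, Matrix.mul_adjugate, Matrix.smul_mul, Matrix.one_mul]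
      rw [this, Matrix.smul_mulVec, sub_self]
    have hDy' : D.mulVec y' = 0 := by
      simp only [y', Matrix.mulVec_sub, Matrix.mulVec_smul, Matrix.mulVec_mulVec]
      rw [hy, ← Matrix.mul_assoc, hZ]
      simp
    have hy' : y' = 0 := by
      ext1 j
      have : N.det * y' j = 0 := by
        apply poly_zero (by omega)
        intro b hb
        have hker : (D.map (eval b)).mulVec (fun j => eval b (y' j)) = 0 := by
          rw [ev_mulVec, hDy']; ext; simp
        have hrange : LinearMap.range (Z.map (eval b)).mulVecLin = LinearMap.ker (D.map (eval b)).mulVecLin := by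
          apply Submodule.eq_of_le_of_finrank_eq
          · rintro _ ⟨x, rfl⟩
            simp only [Matrix.mulVecLin_apply, LinearMap.mem_ker, Matrix.mulVec_mulVec]
            rw [← Matrix.map_mul, hZ]
            ext; simp [Matrix.mulVec, dotProduct]
          · rw [la_ker _ (h.e2 b) (h.h4 b hb)]
            have h4 : Module.finrank k (LinearMap.range (D.map (eval b)).mulVecLin) = 4 := h.h4 b hb
            rw [h4, LinearMap.finrank_range_of_inj]
            · simp
            · rw [← LinearMap.ker_eq_bot, LinearMap.ker_eq_bot']
              exact hi b hb
        have hmem : (fun j => eval b (y' j)) ∈ LinearMap.range (Z.map (eval b)).mulVecLin := by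
          rw [hrange]; exact hker
        obtain ⟨c, hc⟩ := hmem
        have h5 : (N.map (eval b)).mulVec c = 0 := by
          simp only [N]
          rw [Matrix.map_mul, ← Matrix.mulVec_mulVec]
          have : (Z.map (eval b)).mulVec c = fun j => eval b (y' j) := hc
          rw [this, ev_mulVec, hWy']
          ext; simp
        have h6 : eval b N.det • c = 0 := by
          have : ((N.map (eval b)).adjugate * N.map (eval b)).mulVec c = 0 := by
            rw [← Matrix.mulVec_mulVec, h5, Matrix.mulVec_zero]
          rw [Matrix.adjugate_mul, Matrix.smul_mulVec, Matrix.one_mulVec] at this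
          rw [RingHom.map_det]
          exact this
        have h7 : eval b N.det • (fun j => eval b (y' j)) = 0 := by
          rw [← hc, ← map_smul, h6, map_zero]
        rw [map_mul]
        exact congrFun h7 j
      rcases mul_eq_zero.mp this with h | h
      · exact absurd h hN0
      · exact h
    refine ⟨(N.adjugate * W).mulVec y, ?_⟩
    rw [LinearMap.toSpanSingleton_apply, Matrix.mulVecLin_apply]
    exact (sub_eq_zero.mp hy').symm)
  let s : Fin r := ⟨0, by omega⟩
  let t : Fin r := ⟨1, by omega⟩
  have hst : s ≠ t := by simp [s, t]
  obtain ⟨c, hc⟩ := hm s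
  obtain ⟨c', hc'⟩ := hm t
  replace hc : Z.mulVec c = (X s ^ m : MvPolynomial (Fin r) k) • y := hc
  replace hc' : Z.mulVec c' = (X t ^ m : MvPolynomial (Fin r) k) • y := hc'
  have h1 : (X t ^ m : MvPolynomial (Fin r) k) • c - (X s ^ m : MvPolynomial (Fin r) k) • c' = 0 := by
    apply hinj
    rw [Matrix.mulVec_sub, Matrix.mulVec_smul, Matrix.mulVec_smul, hc, hc', smul_smul, smul_smul, mul_comm, sub_self]
  have h2 : ∀ i, X s ^ m ∣ c i := by
    intro i
    apply gcd_X hst m m (c i) (c' i)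
    have := congrFun h1 i
    simpa [sub_eq_zero] using this
  choose q hq using h2
  refine ⟨q, ?_⟩
  have h3 : c = (X s ^ m : MvPolynomial (Fin r) k) • q := by
    ext1 i; exact hq i
  rw [h3, Matrix.mulVec_smul] at hc
  exact (smul_right_injective _ (pow_ne_zero m (X_ne_zero s)) hc).symm

theorem mono_lem (s0 s1 s2 : Fin r) (h0 : s0 ≠ s2) (h1 : s1 ≠ s2) (m : ℕ)
    (a b c : MvPolynomial (Fin r) k) (h : X s2 ^ m * a = X s1 ^ m * b - X s0 ^ m * c) :
    ∃ β γ, a = X s1 ^ m * β - X s0 ^ m * γ := by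
  let T : Set (Fin r →₀ ℕ) := {Finsupp.single s1 m, Finsupp.single s0 m}
  have hT : (fun s => monomial s (1:k)) '' T = {X s1 ^ m, X s0 ^ m} := by
    simp [T, Set.image_pair, X_pow_eq_monomial]
  have ha : a ∈ Ideal.span ((fun s => monomial s (1:k)) '' T) := by
    have h2 : X s2 ^ m * a ∈ Ideal.span ((fun s => monomial s (1:k)) '' T) := by
      rw [hT, Ideal.mem_span_pair]
      exact ⟨b, -c, by rw [h]; ring⟩
    rw [mem_ideal_span_monomial_image] at h2 ⊢
    intro x hx
    obtain ⟨t, ht, hle⟩ := h2 (Finsupp.single s2 m + x) (by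
      rw [mem_support_iff, X_pow_eq_monomial, coeff_monomial_mul, one_mul]
      exact mem_support_iff.mp hx)
    refine ⟨t, ht, ?_⟩
    rcases ht with rfl | ht
    · have := hle s1
      simp [h1.symm] at this ⊢
      exact this
    · rw [Set.mem_singleton_iff] at ht
      subst ht
      have := hle s0
      simp [h0.symm] at this ⊢
      exact this
  rw [hT, Ideal.mem_span_pair] at ha
  obtain ⟨β, γ, h3⟩ := ha
  exact ⟨β, -γ, by rw [← h3]; ring⟩

theorem Gd.F {D : Matrix (Fin 8) (Fin 8) (MvPolynomial (Fin r) k)} {d : Fin 8 → ℤ} (h : Gd D d) (hr : 3 ≤ r)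
    (i : Fin 8) (hi0 : ∀ j, D j i = 0)
    (Z : Matrix (Fin 8) (Fin 4) (MvPolynomial (Fin r) k)) (hZ : D * Z = 0)
    (hi : ∀ a : Fin r → k, a ≠ 0 → ∀ c, (Z.map (eval a)).mulVec c = 0 → c = 0) : False := by
  have hz : D.mulVec (Pi.single i 1) = 0 := by
    ext1 j; simp [hi0]
  have hinj : ∀ c, Z.mulVec c = 0 → c = 0 := by
    intro c hc
    ext1 i
    apply poly_zero (by omega)
    intro a ha
    have := hi a ha (fun i => eval a (c i)) (by rw [ev_mulVec, hc]; ext; simp)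
    exact congrFun this i
  obtain ⟨m, hm⟩ := ann D h.h2 h.h4 _ hz
  let s0 : Fin r := ⟨0, by omega⟩
  let s1 : Fin r := ⟨1, by omega⟩
  let s2 : Fin r := ⟨2, by omega⟩
  have h01 : s0 ≠ s1 := by simp [s0, s1]
  have h02 : s0 ≠ s2 := by simp [s0, s2]
  have h12 : s1 ≠ s2 := by simp [s1, s2]
  choose u hu using hm
  have hk : ∀ s t, ∃ c, (X t ^ m : MvPolynomial (Fin r) k) • u s - (X s ^ m : MvPolynomial (Fin r) k) • u t = Z.mulVec c := by
    intro s t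
    apply h.basis (by omega) Z hZ hi
    rw [Matrix.mulVec_sub, Matrix.mulVec_smul, Matrix.mulVec_smul, hu, hu, smul_smul, smul_smul, mul_comm, sub_self]
  obtain ⟨α, hα⟩ := hk s0 s1
  obtain ⟨α', hα'⟩ := hk s0 s2
  obtain ⟨α'', hα''⟩ := hk s1 s2
  have hco : (X s2 ^ m : MvPolynomial (Fin r) k) • α - ((X s1 ^ m : MvPolynomial (Fin r) k) • α' - (X s0 ^ m : MvPolynomial (Fin r) k) • α'') = 0 := by
    apply hinj
    simp only [Matrix.mulVec_sub, Matrix.mulVec_smul]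
    rw [← hα, ← hα', ← hα'']
    ext1 j
    simp only [Pi.sub_apply, Pi.smul_apply, smul_eq_mul, Pi.zero_apply]
    ring
  have hβ : ∀ q, ∃ β γ, α q = X s1 ^ m * β - X s0 ^ m * γ := by
    intro q
    apply mono_lem s0 s1 s2 h02 h12 m (α q) (α' q) (α'' q)
    have := congrFun hco q
    simpa [sub_eq_zero] using this
  choose β γ hβ using hβ
  have hα2 : α = (X s1 ^ m : MvPolynomial (Fin r) k) • β - (X s0 ^ m : MvPolynomial (Fin r) k) • γ := by
    ext1 q; exact hβ q
  have hdv : ∀ j, X s0 ^ m ∣ u s0 j - Z.mulVec β j := by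
    intro j
    apply gcd_X h01 m m _ (u s1 j - Z.mulVec γ j)
    rw [hα2, Matrix.mulVec_sub, Matrix.mulVec_smul, Matrix.mulVec_smul] at hα
    have := congrFun hα j
    simp only [Pi.sub_apply, Pi.smul_apply, smul_eq_mul] at this
    linear_combination this
  choose q hq using hdv
  have hq' : u s0 - Z.mulVec β = (X s0 ^ m : MvPolynomial (Fin r) k) • q := by
    ext1 j; exact hq j
  have hDq : D.mulVec q = Pi.single i 1 := by
    apply smul_right_injective _ (pow_ne_zero m (X_ne_zero (R := k) s0))
    change _ • _ = _ • _
    rw [← Matrix.mulVec_smul, ← hq', Matrix.mulVec_sub, Matrix.mulVec_mulVec, hZ, Matrix.zero_mulVec, sub_zero, hu]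
  have := congrArg (eval 0) (congrFun hDq i)
  simp only [Matrix.mulVec, dotProduct, map_sum, map_mul, h.h0, zero_mul, Finset.sum_const_zero, Pi.single_eq_same, map_one] at this
  exact zero_ne_one this
end Bas

section HH

theorem prim {A : Type*} [CommRing A] [IsDomain A] [UniqueFactorizationMonoid A] {n : ℕ} (f : Fin n → A) (hf : f ≠ 0) :
    ∃ (g : A) (w : Fin n → A), g ≠ 0 ∧ w ≠ 0 ∧ (∀ i, f i = g * w i) ∧
      ∀ y : Fin n → A, (∀ i j, y i * w j = y j * w i) → ∃ t, ∀ i, y i = t * w i := by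
  classical
  obtain ⟨i0, hi0⟩ := Function.ne_iff.mp hf
  let _ : StrongNormalizationMonoid A := UniqueFactorizationMonoid.strongNormalizationMonoid
  let _ : NormalizedGCDMonoid A := UniqueFactorizationMonoid.toNormalizedGCDMonoid A
  obtain ⟨w, hw, hw1⟩ := Finset.extract_gcd f (s := Finset.univ) ⟨i0, Finset.mem_univ _⟩
  have hg : Finset.univ.gcd f ≠ 0 := by
    intro h; rw [Finset.gcd_eq_zero_iff] at h; exact hi0 (h i0 (Finset.mem_univ _))
  have hwi : w i0 ≠ 0 := by
    intro h
    have := hw i0 (Finset.mem_univ _)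
    rw [h, mul_zero] at this; exact hi0 this
  refine ⟨Finset.univ.gcd f, w, hg, fun h => hwi (by rw [h]; rfl), fun i => hw i (Finset.mem_univ _), ?_⟩
  intro y hy
  have h1 : w i0 ∣ Finset.univ.gcd (fun i => y i0 * w i) := by
    apply Finset.dvd_gcd
    intro i _
    exact ⟨y i, by rw [← hy]; ring⟩
  rw [(Finset.gcd_mul_left' Finset.univ w (y i0)).dvd_iff_dvd_right, hw1, mul_one] at h1
  obtain ⟨t, ht⟩ := h1
  refine ⟨t, fun i => ?_⟩
  apply mul_right_cancel₀ hwi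
  rw [hy i i0, ht]; ring

variable {k : Type*} [Field k] [IsAlgClosed k] {r : ℕ}

theorem ev_single (a : Fin r → k) (i p : Fin 8) :
    eval a ((Pi.single i 1 : Fin 8 → MvPolynomial (Fin r) k) p) = (Pi.single i 1 : Fin 8 → k) p := by
  by_cases h : p = i
  · subst h; simp
  · simp [h]

theorem Gd.tr {D : Matrix (Fin 8) (Fin 8) (MvPolynomial (Fin r) k)} {d : Fin 8 → ℤ} (h : Gd D d) :
    Gd D.transpose (-d) where
  h2 := by rw [← Matrix.transpose_mul, h.h2, Matrix.transpose_zero]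
  h0 i j := h.h0 j i
  h4 a ha := by
    have : D.transpose.map (eval a) = (D.map (eval a)).transpose := rfl
    rw [this, Matrix.rank_transpose]; exact h.h4 a ha
  hh i j := by
    have := h.hh j i
    rw [Matrix.transpose_apply]
    convert this using 1
    simp; ring

theorem Gd.H {D : Matrix (Fin 8) (Fin 8) (MvPolynomial (Fin r) k)} {d : Fin 8 → ℤ} (h : Gd D d) (hr : 3 ≤ r)
    (i1 i2 l : Fin 8) (hne : i1 ≠ i2) (hc1 : ∀ j, D j i1 = 0) (hc2 : ∀ j, D j i2 = 0) (hl : ∀ j, D l j = 0)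
    (hd1 : d l ≤ d i1) (hd2 : d l ≤ d i2) : False := by
  have hG : ∀ a : Fin r → k, a ≠ 0 → ∀ i, (i = i1 ∨ i = i2) →
      ∃ w : Fin 8 → k, w l = 0 ∧ (D.map (eval a)).mulVec w = Pi.single i 1 := by
    intro a ha i hi
    obtain ⟨w, hw, hw'⟩ := h.G (by omega) i (by rcases hi with rfl | rfl <;> assumption) {l}
      (by rintro _ rfl; exact hl) (by rintro _ rfl; rcases hi with rfl | rfl <;> assumption) a ha
    exact ⟨w, hw l rfl, hw'⟩
  have hE : ∀ a : Fin r → k, ∀ j, (D.map (eval a)).mulVec (Pi.single j 1) = fun p => eval a (D p j) := by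
    intro a j; ext p; simp
  let M : (Fin r → k) → Submodule k (Fin 8 → k) := fun a =>
    (LinearMap.ker (LinearMap.proj l : (Fin 8 → k) →ₗ[k] k)).map (D.map (eval a)).mulVecLin
  have hM1 : ∀ a : Fin r → k, a ≠ 0 → ∀ i, (i = i1 ∨ i = i2) → Pi.single i 1 ∈ M a := by
    intro a ha i hi
    obtain ⟨w, hw, hw'⟩ := hG a ha i hi
    exact ⟨w, hw, hw'⟩
  have hM2 : ∀ a j, j ≠ l → (fun p => eval a (D p j)) ∈ M a := by
    intro a j hj
    refine ⟨Pi.single j 1, by simp [hj], ?_⟩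
    rw [← hE]; rfl
  have hM3 : ∀ a : Fin r → k, a ≠ 0 → ∀ γ : k, ∀ x ∈ M a, x + γ • (fun p => eval a (D p l)) = 0 → γ = 0 := by
    rintro a ha γ _ ⟨w, hw, rfl⟩ hx
    have : (D.map (eval a)).mulVec (w + γ • Pi.single l 1) = 0 := by
      rw [Matrix.mulVec_add, Matrix.mulVec_smul, hE]; exact hx
    have h1 := h.row0 a ha l hl _ this
    have hw' : w l = 0 := hw
    simpa [hw'] using h1
  have hMK : ∀ a, ∀ x ∈ M a, x ∈ LinearMap.range (D.map (eval a)).mulVecLin := by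
    rintro a _ ⟨w, -, rfl⟩; exact ⟨w, rfl⟩
  let X : Matrix (Fin 8) (Fin 8) (MvPolynomial (Fin r) k) := fun p j =>
    if p = i1 ∨ p = i2 ∨ j = l then 0 else D p j
  have hX1 : ∀ p j, p ≠ i1 → p ≠ i2 → j ≠ l → X p j = D p j := by
    intro p j h1 h2 h3; simp [X, h1, h2, h3]
  have hXl : ∀ p, X p l = 0 := by intro p; simp [X]
  have hXi : ∀ p j, p = i1 ∨ p = i2 → X p j = 0 := by intro p j hp; simp only [X]; rw [if_pos]; tauto
  have hDX : ∀ j, j ≠ l → ∀ p, D p j = X p j + D i1 j * (Pi.single i1 1 : Fin 8 → _) p + D i2 j * (Pi.single i2 1 : Fin 8 → _) p := by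
    intro j hj p
    by_cases h1 : p = i1
    · subst h1; simp [hXi, hne]
    by_cases h2 : p = i2
    · subst h2; simp [hXi, h1]
    simp [h1, h2, hX1 p j h1 h2 hj]
  have hminor : ∀ p q j j', X p j * X q j' = X q j * X p j' := by
    intro p q j j'
    by_cases hj : j = l
    · subst hj; simp [hXl]
    by_cases hj' : j' = l
    · subst hj'; simp [hXl]
    by_cases hp : p = i1 ∨ p = i2
    · simp [hXi _ _ hp]
    by_cases hq : q = i1 ∨ q = i2
    · simp [hXi _ _ hq]
    rw [← sub_eq_zero]
    apply poly_zero (by omega)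
    intro a ha
    let b : Fin 5 → (Fin 8 → k) := ![fun p => eval a (D p j), fun p => eval a (D p j'), Pi.single i1 1, Pi.single i2 1, fun p => eval a (D p l)]
    have hdep : ¬ LinearIndependent k b := by
      intro hli
      have h1 := finrank_span_eq_card hli
      have h2 : Submodule.span k (Set.range b) ≤ LinearMap.range (D.map (eval a)).mulVecLin := by
        rw [Submodule.span_le]
        rintro _ ⟨i, rfl⟩
        fin_cases i
        · exact hMK a _ (hM2 a j hj)
        · exact hMK a _ (hM2 a j' hj')
        · exact hMK a _ (hM1 a ha i1 (Or.inl rfl))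
        · exact hMK a _ (hM1 a ha i2 (Or.inr rfl))
        · exact ⟨Pi.single l 1, hE a l⟩
      have h3 := Submodule.finrank_mono h2
      have h4 : Module.finrank k (LinearMap.range (D.map (eval a)).mulVecLin) = 4 := h.h4 a ha
      simp at h1
      omega
    rw [Fintype.not_linearIndependent_iff] at hdep
    obtain ⟨c, hc, hc0⟩ := hdep
    simp only [Fin.sum_univ_five] at hc
    have hb0 : b 0 = fun p => eval a (D p j) := rfl
    have hb1 : b 1 = fun p => eval a (D p j') := rfl
    have hb2 : b 2 = Pi.single i1 1 := rfl
    have hb3 : b 3 = Pi.single i2 1 := rfl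
    have hb4 : b 4 = fun p => eval a (D p l) := rfl
    rw [hb0, hb1, hb2, hb3, hb4] at hc
    have hc4 : c 4 = 0 := by
      refine hM3 a ha _ _ ?_ hc
      refine add_mem (add_mem (add_mem ?_ ?_) ?_) ?_ <;> apply Submodule.smul_mem
      · exact hM2 a j hj
      · exact hM2 a j' hj'
      · exact (hM1 a ha i1 (Or.inl rfl))
      · exact (hM1 a ha i2 (Or.inr rfl))
    rw [hc4, zero_smul, add_zero] at hc
    push Not at hp hq
    have ep := congrFun hc p
    have eq := congrFun hc q
    simp [hp.1, hp.2] at ep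
    simp [hq.1, hq.2] at eq
    rw [hX1 p j hp.1 hp.2 hj, hX1 p j' hp.1 hp.2 hj', hX1 q j hq.1 hq.2 hj, hX1 q j' hq.1 hq.2 hj', map_sub, map_mul, map_mul]
    by_contra hcon
    have h0 : c 0 = 0 := by
      apply (mul_eq_zero.mp (?_ : c 0 * _ = 0)).resolve_right hcon
      linear_combination (eval a (D q j')) * ep - (eval a (D p j')) * eq
    have h1 : c 1 = 0 := by
      apply (mul_eq_zero.mp (?_ : c 1 * _ = 0)).resolve_right hcon
      linear_combination -(eval a (D q j)) * ep + (eval a (D p j)) * eq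
    rw [h0, h1] at hc
    have e1 := congrFun hc i1
    have e2 := congrFun hc i2
    simp [hne] at e1
    simp [hne] at e2
    obtain ⟨i, hi⟩ := hc0
    apply hi
    fin_cases i
    · exact h0
    · exact h1
    · exact e1
    · exact e2
    · exact hc4
  have hXa : ∀ a : Fin r → k, a ≠ 0 → ∃ p j, eval a (X p j) ≠ 0 := by
    intro a ha
    by_contra hcon
    push Not at hcon
    have hle : LinearMap.range (D.map (eval a)).mulVecLin ≤ Submodule.span k (Set.range ![Pi.single i1 1, Pi.single i2 1, fun p => eval a (D p l)]) := by
      rw [Matrix.range_mulVecLin, Submodule.span_le]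
      rintro _ ⟨j, rfl⟩
      have e1 : (Pi.single i1 1 : Fin 8 → k) ∈ Submodule.span k (Set.range ![Pi.single i1 1, Pi.single i2 1, fun p => eval a (D p l)]) :=
        Submodule.subset_span ⟨0, rfl⟩
      have e2 : (Pi.single i2 1 : Fin 8 → k) ∈ Submodule.span k (Set.range ![Pi.single i1 1, Pi.single i2 1, fun p => eval a (D p l)]) :=
        Submodule.subset_span ⟨1, rfl⟩
      by_cases hj : j = l
      · subst hj
        exact Submodule.subset_span ⟨2, rfl⟩
      · have : (D.map (eval a)).col j = eval a (D i1 j) • (Pi.single i1 1 : Fin 8 → k) + eval a (D i2 j) • (Pi.single i2 1 : Fin 8 → k) := by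
          ext p
          have := congrArg (eval a) (hDX j hj p)
          simp only [map_add, hcon, zero_add, map_mul] at this
          simp only [Matrix.col_apply, Matrix.map_apply]
          rw [this, ev_single, ev_single]
          rfl
        rw [this]
        exact add_mem (Submodule.smul_mem _ _ e1) (Submodule.smul_mem _ _ e2)
    have h3 := Submodule.finrank_mono hle
    have h4 : Module.finrank k (LinearMap.range (D.map (eval a)).mulVecLin) = 4 := h.h4 a ha
    have h5 := finrank_range_le_card (R := k) ![(Pi.single i1 1 : Fin 8 → k), Pi.single i2 1, fun p => eval a (D p l)]
    simp only [Set.finrank, Fintype.card_fin] at h5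
    omega
  obtain ⟨p0, hp0⟩ : ∃ p0, X p0 ≠ 0 := by
    obtain ⟨p, j, hpj⟩ := hXa (fun _ => 1) (by
      intro h; have := congrFun h ⟨0, by omega⟩; simp at this)
    refine ⟨p, fun h => hpj ?_⟩
    rw [h]; simp
  obtain ⟨g, w, hg, hw0, hgw, hprim⟩ := prim (X p0) hp0
  have hv : ∀ p, ∃ t, ∀ j, X p j = t * w j := by
    intro p
    apply hprim
    intro i j
    apply mul_left_cancel₀ hg
    have := hminor p p0 i j
    rw [hgw i, hgw j] at this
    linear_combination this
  choose v hv using hv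
  obtain ⟨j0, hj0⟩ := Function.ne_iff.mp hw0
  have hj0' : w j0 ≠ 0 := hj0
  have hvi : ∀ p, p = i1 ∨ p = i2 → v p = 0 := by
    intro p hp
    have := hv p j0
    rw [hXi p j0 hp] at this
    exact (mul_eq_zero.mp this.symm).resolve_right hj0'
  have hwl : ∀ j, w j ≠ 0 → j ≠ l := by
    rintro j hwj rfl
    have : ∀ p, v p = 0 := fun p => (mul_eq_zero.mp ((hv p j).symm.trans (hXl p))).resolve_right hwj
    apply hp0
    ext1 j; rw [hv, this]; simp
  have hcolD : ∀ j, D.mulVec (fun p => D p j) = 0 := by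
    intro j
    ext1 p
    exact congrFun (congrFun h.h2 p) j
  have hDv : D.mulVec v = 0 := by
    ext1 p
    apply mul_left_cancel₀ hj0'
    have h1 := congrFun (hcolD j0) p
    simp only [Matrix.mulVec, dotProduct, Pi.zero_apply] at h1 ⊢
    rw [mul_zero, Finset.mul_sum, ← h1]
    apply Finset.sum_congr rfl
    intro q _
    by_cases hq1 : q = i1
    · subst hq1; simp [hc1]
    by_cases hq2 : q = i2
    · subst hq2; simp [hc2]
    rw [← hX1 q j0 hq1 hq2 (hwl j0 hj0'), hv]; ring
  have hDi : ∀ i, i = i1 ∨ i = i2 → D.mulVec (Pi.single i 1) = 0 := by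
    intro i hi
    ext1 j
    rcases hi with rfl | rfl <;> simp [hc1, hc2]
  let Z : Matrix (Fin 8) (Fin 4) (MvPolynomial (Fin r) k) :=
    Matrix.transpose ![Pi.single i1 1, Pi.single i2 1, v, fun p => D p l]
  refine h.F hr i1 hc1 Z ?_ ?_
  · ext1 p q
    have : (D * Z) p q = D.mulVec (fun s => Z s q) p := rfl
    rw [this]
    have h0 : D.mulVec (fun s => Z s q) = 0 := by
      fin_cases q
      · exact hDi i1 (Or.inl rfl)
      · exact hDi i2 (Or.inr rfl)
      · exact hDv
      · exact hcolD l
    rw [h0]; rfl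
  · intro a ha c hc
    have hsum : (c 0 • (Pi.single i1 1 : Fin 8 → k) + c 1 • (Pi.single i2 1 : Fin 8 → k) + c 2 • (fun p => eval a (v p))) + c 3 • (fun p => eval a (D p l)) = 0 := by
      rw [← hc]
      ext p
      simp only [Matrix.mulVec, dotProduct, Fin.sum_univ_four, Z]
      simp only [Pi.add_apply, Pi.smul_apply, smul_eq_mul, Matrix.map_apply, Matrix.transpose_apply]
      change _ = eval a ((Pi.single i1 1 : Fin 8 → MvPolynomial (Fin r) k) p) * c 0 + eval a ((Pi.single i2 1 : Fin 8 → MvPolynomial (Fin r) k) p) * c 1 + eval a (v p) * c 2 + eval a (D p l) * c 3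
      simp only [ev_single]
      ring
    obtain ⟨p1, j1, hpj⟩ := hXa a ha
    rw [hv, map_mul] at hpj
    have hwj : eval a (w j1) ≠ 0 := right_ne_zero_of_mul hpj
    have hvp : eval a (v p1) ≠ 0 := left_ne_zero_of_mul hpj
    have hj1 : j1 ≠ l := hwl j1 (by intro h; rw [h] at hwj; simp at hwj)
    have hvM : (fun p => eval a (v p)) ∈ M a := by
      have h1 : eval a (w j1) • (fun p => eval a (v p)) ∈ M a := by
        have : eval a (w j1) • (fun p => eval a (v p)) = (fun p => eval a (D p j1)) - eval a (D i1 j1) • (Pi.single i1 1 : Fin 8 → k) - eval a (D i2 j1) • (Pi.single i2 1 : Fin 8 → k) := by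
          ext p
          simp only [Pi.sub_apply, Pi.smul_apply, smul_eq_mul]
          rw [hDX j1 hj1 p, hv]
          simp only [map_add, map_mul, ev_single]
          ring
        rw [this]
        exact sub_mem (sub_mem (hM2 a j1 hj1) (Submodule.smul_mem _ _ (hM1 a ha i1 (Or.inl rfl)))) (Submodule.smul_mem _ _ (hM1 a ha i2 (Or.inr rfl)))
      exact ((M a).smul_mem_iff hwj).mp h1
    have h3 : c 3 = 0 := by
      refine hM3 a ha _ _ ?_ hsum
      exact add_mem (add_mem (Submodule.smul_mem _ _ (hM1 a ha i1 (Or.inl rfl))) (Submodule.smul_mem _ _ (hM1 a ha i2 (Or.inr rfl)))) (Submodule.smul_mem _ _ hvM)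
    rw [h3, zero_smul, add_zero] at hsum
    have e1 := congrFun hsum i1
    have e2 := congrFun hsum i2
    simp [hne, hvi i1 (Or.inl rfl)] at e1
    simp [hne, hvi i2 (Or.inr rfl)] at e2
    rw [e1, e2] at hsum
    have e3 := congrFun hsum p1
    simp [hvp] at e3
    ext i
    fin_cases i
    · exact e1
    · exact e2
    · exact e3
    · exact h3

theorem Gd.H' {D : Matrix (Fin 8) (Fin 8) (MvPolynomial (Fin r) k)} {d : Fin 8 → ℤ} (h : Gd D d) (hr : 3 ≤ r)
    (l1 l2 i : Fin 8) (hne : l1 ≠ l2) (hl1 : ∀ j, D l1 j = 0) (hl2 : ∀ j, D l2 j = 0) (hi : ∀ j, D j i = 0)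
    (hd1 : d l1 ≤ d i) (hd2 : d l2 ≤ d i) : False :=
  h.tr.H hr l1 l2 i hne hl1 hl2 hi (by simpa using hd1) (by simpa using hd2)
end HH

section TT
variable {k : Type*} [Field k] [IsAlgClosed k] {r : ℕ}

noncomputable def chi (r : ℕ) (k : Type*) [Field k] (j : ℕ) : MvPolynomial (Fin r) k →ₐ[k] MvPolynomial (Fin r) k :=
  aeval (fun i => if i.val < j then 0 else X i)

theorem chi_X (j : ℕ) (i : Fin r) : chi r k j (X i) = if i.val < j then 0 else X i := by
  simp [chi]

theorem chi_comp (i j : ℕ) (h : i ≤ j) (p : MvPolynomial (Fin r) k) : chi r k j (chi r k i p) = chi r k j p := by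
  have : (chi r k j).comp (chi r k i) = chi r k j := by
    apply MvPolynomial.algHom_ext
    intro s
    simp only [AlgHom.comp_apply, chi_X]
    split_ifs with h1 h2
    · simp
    · omega
    · simp [chi_X, *]
    · simp [chi_X, *]
  exact DFunLike.congr_fun this p

theorem ht_chain (j : ℕ) (hj : j ≤ r) : (j : ℕ∞) ≤ (RingHom.ker (chi r k j)).height := by
  induction j with
  | zero => simp
  | succ j ih =>
    have h1 := ih (by omega)
    have hlt : RingHom.ker (chi r k j) < RingHom.ker (chi r k (j+1)) := by
      rw [lt_iff_le_not_ge]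
      constructor
      · intro p hp
        rw [RingHom.mem_ker] at hp ⊢
        rw [← chi_comp j (j+1) (by omega), hp, map_zero]
      · intro hle
        have h2 : X ⟨j, by omega⟩ ∈ RingHom.ker (chi r k (j+1)) := by
          rw [RingHom.mem_ker, chi_X]; simp
        have h3 := hle h2
        rw [RingHom.mem_ker, chi_X] at h3
        simp at h3
    have hp1 : (RingHom.ker (chi r k j)).IsPrime := RingHom.ker_isPrime _
    have hp2 : (RingHom.ker (chi r k (j+1))).IsPrime := RingHom.ker_isPrime _
    have := Ideal.height_add_one_le_of_lt_of_isPrime hlt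
    push_cast
    exact (add_le_add_left h1 1).trans this

theorem T1 (hr : 4 ≤ r) (f : Fin 3 → MvPolynomial (Fin r) k) (hf : ∀ i, eval 0 (f i) = 0) :
    ∃ a : Fin r → k, a ≠ 0 ∧ ∀ i, eval a (f i) = 0 := by
  classical
  by_contra hcon
  push Not at hcon
  let T : Finset (MvPolynomial (Fin r) k) := Finset.univ.image f
  let I := Ideal.span (T : Set (MvPolynomial (Fin r) k))
  obtain ⟨m, hm⟩ := ns I (by
    intro a ha
    obtain ⟨i, hi⟩ := hcon a ha
    exact ⟨f i, Ideal.subset_span (by simp [T]), hi⟩)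
  let P := RingHom.ker (eval (0 : Fin r → k))
  have hP : P.IsPrime := RingHom.ker_isPrime _
  have hmin : P ∈ I.minimalPrimes := by
    refine ⟨⟨hP, ?_⟩, ?_⟩
    · rw [Ideal.span_le]
      intro x hx
      simp [T] at hx
      obtain ⟨i, rfl⟩ := hx
      exact hf i
    · rintro Q ⟨hQ, hIQ⟩ hQP p hp
      have hXQ : ∀ s, X s ∈ Q := fun s => hQ.mem_of_pow_mem m (hIQ (hm s))
      have : (Ideal.Quotient.mkₐ k Q) = (Algebra.ofId k _).comp (aeval (R := k) (0 : Fin r → k)) := by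
        apply MvPolynomial.algHom_ext
        intro s
        simp only [AlgHom.comp_apply, aeval_X, Pi.zero_apply, map_zero]
        exact Ideal.Quotient.eq_zero_iff_mem.mpr (hXQ s)
      have h2 := DFunLike.congr_fun this p
      have h3 : aeval (R := k) (0 : Fin r → k) p = 0 := hp
      rw [AlgHom.comp_apply, h3, map_zero] at h2
      exact Ideal.Quotient.eq_zero_iff_mem.mp h2
  have h1 : P.height ≤ 3 := by
    refine (Ideal.height_le_card_of_mem_minimalPrimes_span_finset hmin).trans ?_
    have : T.card ≤ 3 := Finset.card_image_le.trans (by simp)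
    exact_mod_cast this
  have h2 := ht_chain (k := k) 4 hr
  have h3 : RingHom.ker (chi r k 4) ≤ P := by
    intro p hp
    rw [RingHom.mem_ker] at hp
    have : (aeval (R := k) (0 : Fin r → k)).comp (chi r k 4) = aeval (0 : Fin r → k) := by
      apply MvPolynomial.algHom_ext
      intro s
      simp only [AlgHom.comp_apply, chi_X]
      split_ifs <;> simp
    have h4 := DFunLike.congr_fun this p
    rw [AlgHom.comp_apply, hp, map_zero] at h4
    exact h4.symm
  have h4 := Ideal.height_mono h3
  have : ((4:ℕ):ℕ∞) ≤ 3 := h2.trans (h4.trans h1)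
  norm_cast at this
end TT

section GG
variable {k : Type*} [Field k] {r : ℕ}

theorem hdiv (p u : MvPolynomial (Fin r) k) (n : ℕ) (hp : p.IsHomogeneous n) (hp0 : p ≠ 0) (h : u ∣ p) :
    IsUnit u ∨ eval 0 u = 0 := by
  classical
  obtain ⟨g, rfl⟩ := h
  by_cases hu : eval 0 u = 0
  · exact Or.inr hu
  left
  have hu0 : u ≠ 0 := left_ne_zero_of_mul hp0
  have hg0 : g ≠ 0 := right_ne_zero_of_mul hp0
  have hex : ∃ m : ℕ, hc (m : ℤ) g ≠ 0 := by
    by_contra hcon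
    push Not at hcon
    apply hg0
    rw [← sum_homogeneousComponent g]
    apply Finset.sum_eq_zero
    intro i _
    have := hcon i
    simpa [hc] using this
  let m := Nat.find hex
  have hm : hc (m : ℤ) g ≠ 0 := Nat.find_spec hex
  have hlt : ∀ j : ℤ, j < m → hc j g = 0 := by
    intro j hj
    by_cases hj0 : 0 ≤ j
    · have := Nat.find_min hex (m := j.toNat) (by omega)
      push Not at this
      rwa [Int.toNat_of_nonneg hj0] at this
    · simp [hc, hj0]
  have hcoef : coeff 0 u = eval 0 u := by
    rw [← constantCoeff_eq, eval_zero]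
  have hcomp : hc (m : ℤ) (u * g) = C (coeff 0 u) * hc (m : ℤ) g := by
    conv_lhs => rw [← sum_homogeneousComponent u]
    rw [Finset.sum_mul, map_sum, Finset.sum_range_succ']
    rw [Finset.sum_eq_zero, zero_add]
    · have := hc_mul (homogeneousComponent 0 u) g 0 m (Or.inr ⟨le_rfl, homogeneousComponent_isHomogeneous 0 u⟩)
      rw [add_zero] at this
      rw [← this, homogeneousComponent_zero]
    · intro i _
      have := hc_mul (homogeneousComponent (i+1) u) g ((i+1 : ℕ) : ℤ) (m - ((i+1 : ℕ) : ℤ)) (Or.inr ⟨by omega, homogeneousComponent_isHomogeneous (i+1) u⟩)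
      rw [sub_add_cancel, hlt _ (by push_cast; omega), mul_zero] at this
      exact this.symm
  have hne : hc (m : ℤ) (u * g) ≠ 0 := by
    rw [hcomp]
    apply mul_ne_zero _ hm
    rw [hcoef]
    simpa using hu
  have hmn : n = m := by
    by_contra hmn
    apply hne
    simp only [hc]
    rw [if_pos (by omega), Int.toNat_natCast, homogeneousComponent_of_mem hp, if_neg (by omega)]
  have h1 := hp.totalDegree hp0
  rw [totalDegree_mul_of_isDomain hu0 hg0] at h1
  have h2 : m ≤ g.totalDegree := by
    by_contra hcon
    apply hm
    simp only [hc]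
    rw [if_pos (by omega), Int.toNat_natCast, homogeneousComponent_eq_zero _ _ (by omega)]
  have h3 : u.totalDegree = 0 := by omega
  rw [totalDegree_eq_zero_iff_eq_C] at h3
  rw [h3]
  refine IsUnit.map C ?_
  rw [hcoef]
  exact isUnit_iff_ne_zero.mpr hu

theorem HomZ.mul {p q : MvPolynomial (Fin r) k} {c e : ℤ} (hp : HomZ p c) (hq : HomZ q e) : HomZ (p * q) (c + e) := by
  rcases hp with rfl | ⟨h1, h2⟩
  · left; simp
  rcases hq with rfl | ⟨h3, h4⟩
  · left; simp
  right
  refine ⟨by omega, ?_⟩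
  rw [Int.toNat_add h1 h3]
  exact h2.mul h4

theorem HomZ.sum {ι : Type*} (s : Finset ι) (f : ι → MvPolynomial (Fin r) k) {c : ℤ} (hf : ∀ i ∈ s, HomZ (f i) c) : HomZ (∑ i ∈ s, f i) c := by
  by_cases h : 0 ≤ c
  · right
    refine ⟨h, IsHomogeneous.sum _ _ _ ?_⟩
    intro i hi
    rcases hf i hi with h | h
    · rw [h]; exact isHomogeneous_zero _ _ _
    · exact h.2
  · left
    apply Finset.sum_eq_zero
    intro i hi
    rcases hf i hi with h | h
    · exact h
    · omega

theorem HomZ.neg {p : MvPolynomial (Fin r) k} {c : ℤ} (hp : HomZ p c) : HomZ (-p) c := by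
  rcases hp with rfl | ⟨h1, h2⟩
  · left; simp
  · exact Or.inr ⟨h1, h2.neg⟩

theorem homZ_trans (d : Fin 8 → ℤ) (p q : Fin 8) (hpq : p ≠ q) (c : MvPolynomial (Fin r) k) (hcc : HomZ c (d p - d q)) (i j : Fin 8) :
    HomZ ((Matrix.transvection p q c) i j) (d i - d j) := by
  by_cases h : i = j
  · subst h
    right
    refine ⟨by omega, ?_⟩
    have : Matrix.transvection p q c i i = 1 := by
      simp only [Matrix.transvection, Matrix.add_apply, Matrix.one_apply_eq, Matrix.single_apply]
      rw [if_neg, add_zero]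
      rintro ⟨rfl, h⟩; exact hpq h.symm
    rw [this, sub_self]
    exact isHomogeneous_one _ _
  · have : Matrix.transvection p q c i j = if p = i ∧ q = j then c else 0 := by
      simp only [Matrix.transvection, Matrix.add_apply, Matrix.one_apply_ne h, Matrix.single_apply, zero_add]
    rw [this]
    split_ifs with h1
    · rw [← h1.1, ← h1.2]; exact hcc
    · left; rfl

theorem Gd.conj {D : Matrix (Fin 8) (Fin 8) (MvPolynomial (Fin r) k)} {d : Fin 8 → ℤ} (h : Gd D d)
    (p q : Fin 8) (hpq : p ≠ q) (c : MvPolynomial (Fin r) k) (hcc : HomZ c (d p - d q)) :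
    Gd (Matrix.transvection p q c * D * Matrix.transvection p q (-c)) d := by
  have hAB : Matrix.transvection p q (-c) * Matrix.transvection p q c = 1 := by
    rw [Matrix.transvection_mul_transvection_same p q hpq]; simp
  constructor
  · have : ∀ A B : Matrix (Fin 8) (Fin 8) (MvPolynomial (Fin r) k), B * A = 1 → A * D * B * (A * D * B) = A * (D * D) * B := by
      intro A B hBA
      calc A * D * B * (A * D * B) = A * D * (B * A) * D * B := by simp only [mul_assoc]
        _ = _ := by rw [hBA, mul_one]; simp only [mul_assoc]
    rw [this _ _ hAB, h.h2]; simp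
  · intro i j
    have h0 : D.map (eval 0) = 0 := by ext i j; exact h.h0 i j
    have : ((Matrix.transvection p q c * D * Matrix.transvection p q (-c)).map (eval 0)) = 0 := by
      rw [Matrix.map_mul, Matrix.map_mul, h0]; simp
    exact congrFun (congrFun this i) j
  · intro a ha
    rw [Matrix.map_mul, Matrix.map_mul]
    have hdet : ∀ c : MvPolynomial (Fin r) k, IsUnit ((Matrix.transvection p q c).map (eval a)).det := by
      intro c
      have : ((Matrix.transvection p q c).map (eval a)).det = 1 := by
        have := RingHom.map_det (eval a) (Matrix.transvection p q c)
        rw [Matrix.det_transvection_of_ne p q hpq, map_one] at this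
        exact this.symm
      rw [this]; exact isUnit_one
    rw [Matrix.rank_mul_eq_left_of_isUnit_det _ _ (hdet _), Matrix.rank_mul_eq_right_of_isUnit_det _ _ (hdet _)]
    exact h.h4 a ha
  · intro i j
    rw [Matrix.mul_apply]
    apply HomZ.sum
    intro l _
    rw [Matrix.mul_apply]
    have e : d i - d j + 1 = (d i - d l + 1) + (d l - d j) := by ring
    rw [e]
    apply HomZ.mul
    · apply HomZ.sum
      intro l' _
      have e : d i - d l + 1 = (d i - d l') + (d l' - d l + 1) := by ring
      rw [e]
      exact (homZ_trans d p q hpq c hcc i l').mul (h.hh l' l)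
    · exact homZ_trans d p q hpq _ hcc.neg l j

theorem rank3 (M : Matrix (Fin 8) (Fin 8) k)
    (h : ∀ p q j j', p ≠ 0 → q ≠ 0 → j ≠ 7 → j' ≠ 7 → M p j * M q j' = M q j * M p j') : M.rank ≤ 3 := by
  obtain ⟨x, t, hxt⟩ : ∃ (x : Fin 8 → k) (t : Fin 8 → k), ∀ p j, p ≠ 0 → j ≠ 7 → M p j = t j * x p := by
    by_cases h0 : ∃ p j, p ≠ 0 ∧ j ≠ 7 ∧ M p j ≠ 0
    · obtain ⟨p0, j0, hp0, hj0, hne⟩ := h0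
      refine ⟨fun p => M p j0, fun j => M p0 j / M p0 j0, fun p j hp hj => ?_⟩
      have := h p p0 j j0 hp hp0 hj hj0
      field_simp
      linear_combination this
    · push Not at h0
      exact ⟨0, 0, fun p j hp hj => by simp [h0 p j hp hj]⟩
  let b : Fin 3 → (Fin 8 → k) := ![Pi.single 0 1, x, M.col 7]
  have hle : LinearMap.range M.mulVecLin ≤ Submodule.span k (Set.range b) := by
    rw [Matrix.range_mulVecLin, Submodule.span_le]
    rintro _ ⟨j, rfl⟩
    have e0 : (Pi.single 0 1 : Fin 8 → k) ∈ Submodule.span k (Set.range b) := Submodule.subset_span ⟨0, rfl⟩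
    have e1 : x ∈ Submodule.span k (Set.range b) := Submodule.subset_span ⟨1, rfl⟩
    by_cases hj : j = 7
    · subst hj
      exact Submodule.subset_span ⟨2, rfl⟩
    · have : M.col j = t j • x + (M 0 j - t j * x 0) • (Pi.single 0 1 : Fin 8 → k) := by
        ext p
        by_cases hp : p = 0
        · subst hp; simp
        · simp [hp, hxt p j hp hj]
      rw [this]
      exact add_mem (Submodule.smul_mem _ _ e1) (Submodule.smul_mem _ _ e0)
  have h3 := Submodule.finrank_mono hle
  have h5 := finrank_range_le_card (R := k) b
  simp only [Set.finrank, Fintype.card_fin] at h5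
  exact h3.trans h5
end GG

section JJ
variable {k : Type*} [Field k] [IsAlgClosed k] {r : ℕ}

theorem p12_ne {D : Matrix (Fin 8) (Fin 8) (MvPolynomial (Fin r) k)} {d : Fin 8 → ℤ} (h : Gd D d) (hr : 3 ≤ r)
    (htri : ∀ i j : Fin 8, j ≤ i → D i j = 0) (hd : Antitone d) : D 0 1 ≠ 0 := by
  intro h0
  refine h.H hr 0 1 7 (by decide) (fun j => htri j 0 (Fin.zero_le j)) ?_ (fun j => htri 7 j (Fin.le_last j)) (hd (by decide)) (hd (by decide))
  intro j
  by_cases hj : j = 0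
  · rw [hj]; exact h0
  · exact htri j 1 (Fin.one_le_of_ne_zero hj)

theorem p78_ne {D : Matrix (Fin 8) (Fin 8) (MvPolynomial (Fin r) k)} {d : Fin 8 → ℤ} (h : Gd D d) (hr : 3 ≤ r)
    (htri : ∀ i j : Fin 8, j ≤ i → D i j = 0) (hd : Antitone d) : D 6 7 ≠ 0 := by
  intro h0
  refine h.H' hr 7 6 0 (by decide) (fun j => htri 7 j (Fin.le_last j)) ?_ (fun j => htri j 0 (Fin.zero_le j)) (hd (by decide)) (hd (by decide))
  intro j
  by_cases hj : j = 7
  · rw [hj]; exact h0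
  · exact htri 6 j (by omega)

theorem p12_ndvd {D : Matrix (Fin 8) (Fin 8) (MvPolynomial (Fin r) k)} {d : Fin 8 → ℤ} (h : Gd D d) (hr : 3 ≤ r)
    (htri : ∀ i j : Fin 8, j ≤ i → D i j = 0) (hd : Antitone d) (h12 : D 1 2 = 0) : ¬ D 0 1 ∣ D 0 2 := by
  rintro ⟨c', hc'⟩
  let c := hc (d 1 - d 2) c'
  have hcc : HomZ c (d 1 - d 2) := hc_homZ _ _
  have hcD : D 0 2 = D 0 1 * c := by
    rw [hc_mul _ _ _ _ (h.hh 0 1), ← hc', hc_self]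
    convert h.hh 0 2 using 1; ring
  have h' := h.conj 1 2 (by decide) c hcc
  have hA : ∀ (c : MvPolynomial (Fin r) k) (N : Matrix (Fin 8) (Fin 8) (MvPolynomial (Fin r) k)) i j,
      i ≠ 1 → (Matrix.transvection (1 : Fin 8) 2 c * N) i j = N i j := by
    intro c N i j hi
    exact Matrix.transvection_mul_apply_of_ne 1 2 i j hi c N
  have hA1 : ∀ (c : MvPolynomial (Fin r) k) (N : Matrix (Fin 8) (Fin 8) (MvPolynomial (Fin r) k)) j,
      (Matrix.transvection (1 : Fin 8) 2 c * N) 1 j = N 1 j + c * N 2 j := by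
    intro c N j
    exact Matrix.transvection_mul_apply_same 1 2 j c N
  have hB : ∀ (c : MvPolynomial (Fin r) k) (N : Matrix (Fin 8) (Fin 8) (MvPolynomial (Fin r) k)) i j,
      j ≠ 2 → (N * Matrix.transvection (1 : Fin 8) 2 c) i j = N i j := by
    intro c N i j hj
    exact Matrix.mul_transvection_apply_of_ne 1 2 i j hj c N
  have hB2 : ∀ (c : MvPolynomial (Fin r) k) (N : Matrix (Fin 8) (Fin 8) (MvPolynomial (Fin r) k)) i,
      (N * Matrix.transvection (1 : Fin 8) 2 c) i 2 = N i 2 + c * N i 1 := by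
    intro c N i
    exact Matrix.mul_transvection_apply_same 1 2 i c N
  refine h'.H hr 0 2 7 (by decide) ?_ ?_ ?_ (hd (by decide)) (hd (by decide))
  · intro j
    rw [hB _ _ _ _ (by decide)]
    by_cases hj : j = 1
    · subst hj; rw [hA1, htri 1 0 (by decide), htri 2 0 (by decide)]; simp
    · rw [hA _ _ _ _ hj, htri j 0 (Fin.zero_le j)]
  · intro j
    rw [hB2]
    by_cases hj : j = 1
    · subst hj; rw [hA1, hA1, h12, htri 2 2 (by decide), htri 1 1 (by decide), htri 2 1 (by decide)]; simp
    · rw [hA _ _ _ _ hj, hA _ _ _ _ hj]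
      by_cases hj0 : j = 0
      · subst hj0; rw [hcD]; ring
      · rw [htri j 2 (by omega), htri j 1 (by omega)]; simp
  · intro j
    have h7 : ∀ j, (Matrix.transvection (1 : Fin 8) 2 c * D) 7 j = 0 := by
      intro j
      rw [hA _ _ _ _ (by decide), htri 7 j (Fin.le_last j)]
    by_cases hj : j = 2
    · subst hj; rw [hB2, h7, h7]; simp
    · rw [hB _ _ _ _ hj, h7]

theorem prim0 {D : Matrix (Fin 8) (Fin 8) (MvPolynomial (Fin r) k)} {d : Fin 8 → ℤ} (h : Gd D d) (hd : Antitone d)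
    (h01 : D 0 1 ≠ 0) (hnd : ¬ D 0 1 ∣ D 0 2) {n : ℕ} (idx : Fin n → Fin 8) (i0 i1 : Fin n) (hi0 : idx i0 = 1) (hi1 : idx i1 = 2)
    (hidx : ∀ i, 1 ≤ idx i) (g : MvPolynomial (Fin r) k) (hg : g ≠ 0) (w : Fin n → MvPolynomial (Fin r) k)
    (hw : ∀ i, D 0 (idx i) = g * w i) (i : Fin n) : eval 0 (w i) = 0 := by
  by_cases h0 : D 0 (idx i) = 0
  · have := hw i
    rw [h0] at this
    rw [(mul_eq_zero.mp this.symm).resolve_left hg]; simp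
  rcases h.hh 0 (idx i) with h1 | ⟨hn, h1⟩
  · exact absurd h1 h0
  rcases hdiv _ (w i) _ h1 h0 ⟨g, by rw [hw i]; ring⟩ with hu | hu
  · exfalso
    have hdg : ∀ j, D 0 (idx i) ∣ D 0 (idx j) := by
      intro j
      rw [hw i, hw j]
      exact mul_dvd_mul_left g (hu.dvd)
    have e1 := hdg i0
    have e2 := hdg i1
    rw [hi0] at e1
    rw [hi1] at e2
    apply hnd
    refine dvd_trans ?_ e2
    obtain ⟨q, hq⟩ := e1
    rcases h.hh 0 1 with h3 | ⟨hn', h3⟩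
    · exact absurd h3 h01
    have hq0 : q ≠ 0 := by rintro rfl; simp at hq; exact h01 hq
    have t1 := h3.totalDegree h01
    have t2 := h1.totalDegree h0
    rw [hq, totalDegree_mul_of_isDomain h0 hq0] at t1
    have hdd : d (idx i) ≤ d 1 := hd (hidx i)
    have hq1 : q.totalDegree = 0 := by omega
    rw [totalDegree_eq_zero_iff_eq_C] at hq1
    have hqu : IsUnit q := by
      rw [hq1]
      refine IsUnit.map C (isUnit_iff_ne_zero.mpr ?_)
      intro hh; rw [hh] at hq1; simp at hq1; exact hq0 hq1
    rw [hq]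
    obtain ⟨v, rfl⟩ := hqu
    exact Units.mul_right_dvd.mpr dvd_rfl
  · exact hu

set_option maxHeartbeats 4000000 in
theorem r4 {D : Matrix (Fin 8) (Fin 8) (MvPolynomial (Fin r) k)} {d : Fin 8 → ℤ} (h : Gd D d) (hr : 4 ≤ r)
    (htri : ∀ i j : Fin 8, j ≤ i → D i j = 0) (hd : Antitone d) : False := by
  have h01 := p12_ne h (by omega) htri hd
  have h67 := p78_ne h (by omega) htri hd
  have e : ∀ i j, D i 0 * D 0 j + D i 1 * D 1 j + D i 2 * D 2 j + D i 3 * D 3 j + D i 4 * D 4 j + D i 5 * D 5 j + D i 6 * D 6 j + D i 7 * D 7 j = 0 := by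
    intro i j
    have := congrFun (congrFun h.h2 i) j
    rw [Matrix.mul_apply, Fin.sum_univ_eight] at this
    exact this
  have t00 : ∀ j, D j 0 = 0 := fun j => htri j 0 (Fin.zero_le j)
  have t7 : ∀ j, D 7 j = 0 := fun j => htri 7 j (Fin.le_last j)
  have t11 := htri 1 1 (by decide)
  have t21 := htri 2 1 (by decide)
  have t22 := htri 2 2 (by decide)
  have t31 := htri 3 1 (by decide)
  have t32 := htri 3 2 (by decide)
  have t33 := htri 3 3 (by decide)
  have t41 := htri 4 1 (by decide)
  have t42 := htri 4 2 (by decide)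
  have t43 := htri 4 3 (by decide)
  have t44 := htri 4 4 (by decide)
  have t51 := htri 5 1 (by decide)
  have t52 := htri 5 2 (by decide)
  have t53 := htri 5 3 (by decide)
  have t54 := htri 5 4 (by decide)
  have t55 := htri 5 5 (by decide)
  have t61 := htri 6 1 (by decide)
  have t62 := htri 6 2 (by decide)
  have t63 := htri 6 3 (by decide)
  have t64 := htri 6 4 (by decide)
  have t65 := htri 6 5 (by decide)
  have t66 := htri 6 6 (by decide)
  have h12 : D 1 2 = 0 := by
    have := e 0 2
    simp only [t00, t7, t22, t32, t42, t52, t62, zero_mul, mul_zero, add_zero, zero_add] at this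
    exact (mul_eq_zero.mp this).resolve_left h01
  have h56 : D 5 6 = 0 := by
    have := e 5 7
    simp only [t00, t7, t51, t52, t53, t54, t55, zero_mul, mul_zero, add_zero, zero_add] at this
    exact (mul_eq_zero.mp this).resolve_right h67
  have hnd := p12_ndvd h (by omega) htri hd h12
  by_cases h34 : D 3 4 = 0
  ·
    let f : Fin 2 → MvPolynomial (Fin r) k := ![D 0 1, D 0 2]
    obtain ⟨g, w, hg, hw0, hgw, hprim⟩ := prim f (fun h0 => h01 (congrFun h0 0))
    have e01 : D 0 1 = g * w 0 := hgw 0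
    have e02 : D 0 2 = g * w 1 := hgw 1
    have hwz : ∀ i, eval 0 (w i) = 0 := prim0 h hd h01 hnd ![1, 2] 0 1 rfl rfl (by intro i; fin_cases i <;> decide) g hg w
      (by intro i; fin_cases i; exact e01; exact e02)
    let f' : Fin 2 → MvPolynomial (Fin r) k := ![D 5 7, D 6 7]
    obtain ⟨g', w', hg', hw0', hgw', hprim'⟩ := prim f' (fun h0 => h67 (congrFun h0 1))
    have e57 : D 5 7 = g' * w' 0 := hgw' 0
    have e67 : D 6 7 = g' * w' 1 := hgw' 1
    have hpr : ∀ x y, x * w 1 = y * w 0 → ∃ t, x = t * w 0 ∧ y = t * w 1 := by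
      intro x y hxy
      obtain ⟨t, ht⟩ := hprim ![x, y] (by
        intro i j; fin_cases i <;> fin_cases j <;> simp [hxy])
      exact ⟨t, ht 0, ht 1⟩
    have hpr' : ∀ x y, x * w' 1 = y * w' 0 → ∃ t, x = t * w' 0 ∧ y = t * w' 1 := by
      intro x y hxy
      obtain ⟨t, ht⟩ := hprim' ![x, y] (by
        intro i j; fin_cases i <;> fin_cases j <;> simp [hxy])
      exact ⟨t, ht 0, ht 1⟩
    obtain ⟨h4, h4a, h4b⟩ := hpr (D 2 3) (-D 1 3) (by
      apply mul_left_cancel₀ hg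
      have := e 0 3
      simp only [t00, t7, t33, t43, t53, t63, zero_mul, mul_zero, add_zero, zero_add, e01, e02] at this
      linear_combination this)
    obtain ⟨h5, h5a, h5b⟩ := hpr (D 2 4) (-D 1 4) (by
      apply mul_left_cancel₀ hg
      have := e 0 4
      simp only [t00, t7, h34, t44, t54, t64, zero_mul, mul_zero, add_zero, zero_add, e01, e02] at this
      linear_combination this)
    have r3 : D 3 5 * w' 0 + D 3 6 * w' 1 = 0 := by
      apply mul_left_cancel₀ hg'
      have := e 3 7
      simp only [t00, t7, t31, t32, t33, h34, zero_mul, mul_zero, add_zero, zero_add, e57, e67] at this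
      linear_combination this
    have r4 : D 4 5 * w' 0 + D 4 6 * w' 1 = 0 := by
      apply mul_left_cancel₀ hg'
      have := e 4 7
      simp only [t00, t7, t41, t42, t43, t44, zero_mul, mul_zero, add_zero, zero_add, e57, e67] at this
      linear_combination this
    obtain ⟨k4, k4a, k4b⟩ := hpr' (-D 3 6) (D 3 5) (by linear_combination -r3)
    obtain ⟨k5, k5a, k5b⟩ := hpr' (-D 4 6) (D 4 5) (by linear_combination -r4)
    have q1 := e 1 7
    have q2 := e 2 7
    simp only [t00, t7, t11, h12, zero_mul, mul_zero, add_zero, zero_add, e57, e67] at q1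
    simp only [t00, t7, t21, t22, zero_mul, mul_zero, add_zero, zero_add, e57, e67, h4a, h5a] at q2
    have h13 : D 1 3 = -(h4 * w 1) := by linear_combination -h4b
    have h14 : D 1 4 = -(h5 * w 1) := by linear_combination -h5b
    rw [h13, h14] at q1
    obtain ⟨s, sa, sb⟩ := hpr (-(D 2 5 * w' 0 + D 2 6 * w' 1)) (D 1 5 * w' 0 + D 1 6 * w' 1) (by
      apply mul_left_cancel₀ hg'
      linear_combination -(w 1) * q2 - (w 0) * q1)
    obtain ⟨a, ha, hfa⟩ := T1 hr ![w 0, w 1, D 1 5 * D 2 6 - D 2 5 * D 1 6] (by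
      intro i
      fin_cases i
      · exact hwz 0
      · exact hwz 1
      · change eval 0 (D 1 5 * D 2 6 - D 2 5 * D 1 6) = 0
        simp only [map_sub, map_mul, h.h0]; ring)
    have a0 : eval a (w 0) = 0 := hfa 0
    have a1 : eval a (w 1) = 0 := hfa 1
    have a2 : eval a (D 1 5) * eval a (D 2 6) - eval a (D 2 5) * eval a (D 1 6) = 0 := by
      have := hfa 2
      rw [← map_mul, ← map_mul, ← map_sub]; exact this
    have hrk := h.h4 a ha
    have : (D.map (eval a)).rank ≤ 3 := by
      apply rank3
      have hz : ∀ p j, p ≠ 0 → j ≠ 7 → j ≠ 5 → j ≠ 6 → eval a (D p j) = 0 := by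
        intro p j hp h7 h5' h6'
        by_cases hpj : j ≤ p
        · rw [htri p j hpj, map_zero]
        have hcases : (p = 1 ∧ (j = 2 ∨ j = 3 ∨ j = 4)) ∨ (p = 2 ∧ (j = 3 ∨ j = 4)) ∨ (p = 3 ∧ j = 4) := by omega
        rcases hcases with ⟨rfl, rfl | rfl | rfl⟩ | ⟨rfl, rfl | rfl⟩ | ⟨rfl, rfl⟩
        · rw [h12, map_zero]
        · rw [h13]; simp [a1]
        · rw [h14]; simp [a1]
        · rw [h4a]; simp [a0]
        · rw [h5a]; simp [a0]
        · rw [h34, map_zero]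
      have hrel : ∀ p, p ≠ 0 → eval a (D p 5) * eval a (w' 0) + eval a (D p 6) * eval a (w' 1) = 0 := by
        intro p hp
        rw [← map_mul, ← map_mul, ← map_add]
        have hcases : p = 1 ∨ p = 2 ∨ p = 3 ∨ p = 4 ∨ p = 5 ∨ p = 6 ∨ p = 7 := by omega
        rcases hcases with rfl | rfl | rfl | rfl | rfl | rfl | rfl
        · rw [sb]; simp [a1]
        · rw [← neg_eq_zero, ← map_neg, sa]; simp [a0]
        · rw [r3, map_zero]
        · rw [r4, map_zero]
        · rw [t55, h56]; simp
        · rw [t65, t66]; simp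
        · rw [t7, t7]; simp
      have hmin : ∀ p q, p ≠ 0 → q ≠ 0 → eval a (D p 5) * eval a (D q 6) = eval a (D q 5) * eval a (D p 6) := by
        intro p q hp hq
        by_cases c0 : eval a (w' 0) = 0
        · by_cases c1 : eval a (w' 1) = 0
          · have hz3 : ∀ p, p ≠ 0 → p ≠ 1 → p ≠ 2 → eval a (D p 5) = 0 ∧ eval a (D p 6) = 0 := by
              intro p hp hp1 hp2
              have hcases : p = 3 ∨ p = 4 ∨ p = 5 ∨ p = 6 ∨ p = 7 := by omega
              rcases hcases with rfl | rfl | rfl | rfl | rfl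
              · have : D 3 6 = -(k4 * w' 0) := by linear_combination -k4a
                rw [k4b, this]; simp [c0, c1]
              · have : D 4 6 = -(k5 * w' 0) := by linear_combination -k5a
                rw [k5b, this]; simp [c0, c1]
              · rw [t55, h56]; simp
              · rw [t65, t66]; simp
              · rw [t7, t7]; simp
            by_cases hp12 : p = 1 ∨ p = 2
            · by_cases hq12 : q = 1 ∨ q = 2
              · rcases hp12 with rfl | rfl <;> rcases hq12 with rfl | rfl
                · rfl
                · linear_combination a2
                · linear_combination -a2
                · rfl
              · push Not at hq12
                rw [(hz3 q hq hq12.1 hq12.2).1, (hz3 q hq hq12.1 hq12.2).2]; ring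
            · push Not at hp12
              rw [(hz3 p hp hp12.1 hp12.2).1, (hz3 p hp hp12.1 hp12.2).2]; ring
          · apply mul_left_cancel₀ c1
            linear_combination (eval a (D p 5)) * hrel q hq - (eval a (D q 5)) * hrel p hp
        · apply mul_left_cancel₀ c0
          linear_combination (eval a (D q 6)) * hrel p hp - (eval a (D p 6)) * hrel q hq
      intro p q j j' hp hq hj hj'
      simp only [Matrix.map_apply]
      by_cases hj5 : j ≠ 5 ∧ j ≠ 6
      · rw [hz p j hp hj hj5.1 hj5.2, hz q j hq hj hj5.1 hj5.2]; ring
      by_cases hj5' : j' ≠ 5 ∧ j' ≠ 6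
      · rw [hz p j' hp hj' hj5'.1 hj5'.2, hz q j' hq hj' hj5'.1 hj5'.2]; ring
      have c1 : j = 5 ∨ j = 6 := by omega
      have c2 : j' = 5 ∨ j' = 6 := by omega
      rcases c1 with rfl | rfl <;> rcases c2 with rfl | rfl
      · ring
      · exact hmin p q hp hq
      · linear_combination -(hmin p q hp hq)
      · ring
    omega
  ·
    have h13 : D 1 3 = 0 := by
      have := e 1 4
      simp only [t00, t7, t11, h12, t44, t54, t64, zero_mul, mul_zero, add_zero, zero_add] at this
      exact (mul_eq_zero.mp this).resolve_right h34
    have h23 : D 2 3 = 0 := by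
      have := e 2 4
      simp only [t00, t7, t21, t22, t44, t54, t64, zero_mul, mul_zero, add_zero, zero_add] at this
      exact (mul_eq_zero.mp this).resolve_right h34
    have h45 : D 4 5 = 0 := by
      have := e 3 5
      simp only [t00, t7, t31, t32, t33, t55, t65, zero_mul, mul_zero, add_zero, zero_add] at this
      exact (mul_eq_zero.mp this).resolve_left h34
    have h46 : D 4 6 = 0 := by
      have := e 3 6
      simp only [t00, t7, t31, t32, t33, h56, t66, zero_mul, mul_zero, add_zero, zero_add] at this
      exact (mul_eq_zero.mp this).resolve_left h34
    let f : Fin 3 → MvPolynomial (Fin r) k := ![D 0 1, D 0 2, D 0 3]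
    obtain ⟨g, w, hg, hw0, hgw, hprim⟩ := prim f (fun h0 => h01 (congrFun h0 0))
    have e01 : D 0 1 = g * w 0 := hgw 0
    have e02 : D 0 2 = g * w 1 := hgw 1
    have e03 : D 0 3 = g * w 2 := hgw 2
    have hwz : ∀ i, eval 0 (w i) = 0 := prim0 h hd h01 hnd ![1, 2, 3] 0 1 rfl rfl (by intro i; fin_cases i <;> decide) g hg w
      (by intro i; fin_cases i; exact e01; exact e02; exact e03)
    obtain ⟨a, ha, hfa⟩ := T1 hr w hwz
    have horth : ∀ j, j = 4 ∨ j = 5 ∨ j = 6 → w 0 * D 1 j + w 1 * D 2 j + w 2 * D 3 j = 0 := by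
      intro j hj
      apply mul_left_cancel₀ hg
      have := e 0 j
      rcases hj with rfl | rfl | rfl
      · simp only [t00, t7, t44, t54, t64, zero_mul, mul_zero, add_zero, zero_add, e01, e02, e03] at this
        linear_combination this
      · simp only [t00, t7, h45, t55, t65, zero_mul, mul_zero, add_zero, zero_add, e01, e02, e03] at this
        linear_combination this
      · simp only [t00, t7, h46, h56, t66, zero_mul, mul_zero, add_zero, zero_add, e01, e02, e03] at this
        linear_combination this
    have hcross : ∀ j j', j = 4 ∨ j = 5 ∨ j = 6 → j' = 4 ∨ j' = 5 ∨ j' = 6 →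
        eval a (D 2 j * D 3 j' - D 3 j * D 2 j') = 0 ∧ eval a (D 3 j * D 1 j' - D 1 j * D 3 j') = 0 ∧
        eval a (D 1 j * D 2 j' - D 2 j * D 1 j') = 0 := by
      intro j j' hj hj'
      have o1 := horth j hj
      have o2 := horth j' hj'
      have c01 : (D 2 j * D 3 j' - D 3 j * D 2 j') * w 1 = (D 3 j * D 1 j' - D 1 j * D 3 j') * w 0 := by
        linear_combination D 3 j' * o1 - D 3 j * o2
      have c02 : (D 2 j * D 3 j' - D 3 j * D 2 j') * w 2 = (D 1 j * D 2 j' - D 2 j * D 1 j') * w 0 := by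
        linear_combination D 2 j * o2 - D 2 j' * o1
      have c12 : (D 3 j * D 1 j' - D 1 j * D 3 j') * w 2 = (D 1 j * D 2 j' - D 2 j * D 1 j') * w 1 := by
        linear_combination D 1 j' * o1 - D 1 j * o2
      obtain ⟨t, ht⟩ := hprim ![D 2 j * D 3 j' - D 3 j * D 2 j', D 3 j * D 1 j' - D 1 j * D 3 j', D 1 j * D 2 j' - D 2 j * D 1 j'] (by
        intro i i'
        fin_cases i <;> fin_cases i'
        · rfl
        · exact c01
        · exact c02
        · exact c01.symm
        · rfl
        · exact c12
        · exact c02.symm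
        · exact c12.symm
        · rfl)
      have t0 := congrArg (eval a) (ht 0)
      have t1 := congrArg (eval a) (ht 1)
      have t2 := congrArg (eval a) (ht 2)
      rw [map_mul, hfa, mul_zero] at t0 t1 t2
      exact ⟨t0, t1, t2⟩
    have hrk := h.h4 a ha
    have : (D.map (eval a)).rank ≤ 3 := by
      apply rank3
      have hz : ∀ p j, p ≠ 0 → j ≠ 7 → (j ≠ 4 ∧ j ≠ 5 ∧ j ≠ 6) ∨ (p ≠ 1 ∧ p ≠ 2 ∧ p ≠ 3) → D p j = 0 := by
        intro p j hp h7 hpj'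
        by_cases hpj : j ≤ p
        · exact htri p j hpj
        have hcases : (p = 1 ∧ (j = 2 ∨ j = 3)) ∨ (p = 2 ∧ j = 3) ∨ (p = 4 ∧ (j = 5 ∨ j = 6)) ∨ (p = 5 ∧ j = 6) := by omega
        rcases hcases with ⟨rfl, rfl | rfl⟩ | ⟨rfl, rfl⟩ | ⟨rfl, rfl | rfl⟩ | ⟨rfl, rfl⟩ <;> assumption
      intro p q j j' hp hq hj hj'
      simp only [Matrix.map_apply]
      by_cases hj5 : j ≠ 4 ∧ j ≠ 5 ∧ j ≠ 6
      · rw [hz p j hp hj (Or.inl hj5), hz q j hq hj (Or.inl hj5)]; simp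
      by_cases hj5' : j' ≠ 4 ∧ j' ≠ 5 ∧ j' ≠ 6
      · rw [hz p j' hp hj' (Or.inl hj5'), hz q j' hq hj' (Or.inl hj5')]; simp
      by_cases hp1 : p ≠ 1 ∧ p ≠ 2 ∧ p ≠ 3
      · rw [hz p j hp hj (Or.inr hp1), hz p j' hp hj' (Or.inr hp1)]; simp
      by_cases hq1 : q ≠ 1 ∧ q ≠ 2 ∧ q ≠ 3
      · rw [hz q j hq hj (Or.inr hq1), hz q j' hq hj' (Or.inr hq1)]; simp
      have c1 : j = 4 ∨ j = 5 ∨ j = 6 := by omega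
      have c2 : j' = 4 ∨ j' = 5 ∨ j' = 6 := by omega
      have c3 : p = 1 ∨ p = 2 ∨ p = 3 := by omega
      have c4 : q = 1 ∨ q = 2 ∨ q = 3 := by omega
      obtain ⟨m1, m2, m3⟩ := hcross j j' c1 c2
      simp only [map_sub, map_mul] at m1 m2 m3
      rcases c3 with rfl | rfl | rfl <;> rcases c4 with rfl | rfl | rfl
      · rfl
      · linear_combination m3
      · linear_combination -m2
      · linear_combination -m3
      · rfl
      · linear_combination m1
      · linear_combination m2
      · linear_combination -m1
      · rfl
    omega

theorem final_bound {r : ℕ} (hr : 0 < r)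
    {R C : ℕ} (hR : 0 < R) (hC : 0 < C)
    (D : Matrix (Fin 8) (Fin 8) (MvPolynomial (Fin r) k)) {d : Fin 8 → ℤ} (h : Gd D d)
    (htri : ∀ i j : Fin 8, j ≤ i → D i j = 0) (hd : Antitone d)
    (hzero : ∀ i j : Fin 8, ((j : ℕ) + 1 ≤ C ∨ (i : ℕ) + 1 ≥ 9 - R) → D i j = 0) :
    8 ≥ 2 ^ (r - 1) * (R + C) := by
  have ha : (fun _ => 1 : Fin r → k) ≠ 0 := by
    intro h; have := congrFun h ⟨0, hr⟩; simp at this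
  have hrk := h.h4 _ ha
  set a := (fun _ => 1 : Fin r → k)
  have hC4 : C ≤ 4 := by
    by_contra hcon
    have := rank_le_nzcols (D.map (eval a)) {5, 6, 7} (by
      intro j hj i
      simp at hj
      rw [Matrix.map_apply, hzero i j (by left; omega), map_zero])
    have h3 : ({5, 6, 7} : Finset (Fin 8)).card = 3 := by decide
    omega
  have hR4 : R ≤ 4 := by
    by_contra hcon
    have := rank_le_nzrows (D.map (eval a)) {0, 1, 2} (by
      intro i hi j
      simp at hi
      rw [Matrix.map_apply, hzero i j (by right; omega), map_zero])
    have h3 : ({0, 1, 2} : Finset (Fin 8)).card = 3 := by decide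
    omega
  obtain h1 | h1 | h1 | h1 : r = 1 ∨ r = 2 ∨ r = 3 ∨ 4 ≤ r := by omega
  · subst h1; simp <;> omega
  · subst h1
    have := h.card le_rfl (m := C) (n := R) (fun i => ⟨i.val, by omega⟩) (by intro i j hij; simpa [Fin.ext_iff] using hij)
      (fun i => ⟨7 - i.val, by omega⟩) (by intro i j hij; simp [Fin.ext_iff] at hij; omega)
      (fun i j => hzero _ _ (by left; simp <;> omega)) (fun i j => hzero _ _ (by right; simp <;> omega))
      (fun i j => hd (by simp [Fin.le_def]; omega))
    simp <;> omega
  · subst h1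
    have hC1 : C ≤ 1 := by
      by_contra hcon
      apply p12_ne h le_rfl htri hd
      apply hzero; left; simp <;> omega
    have hR1 : R ≤ 1 := by
      by_contra hcon
      apply p78_ne h le_rfl htri hd
      apply hzero; right; simp <;> omega
    simp <;> omega
  · exact (r4 h h1 htri hd).elim
end JJ

theorem statement_2 {k : Type*} [Field k] [IsAlgClosed k] {r : ℕ} (hr : 0 < r)
    {R C : ℕ} (hR : 0 < R) (hC : 0 < C)
    (D : Matrix (Fin 8) (Fin 8) (MvPolynomial (Fin r) k))
    (hstd : StandardConditions D)
    (hzero : ∀ i j : Fin 8, ((j : ℕ) + 1 ≤ C ∨ (i : ℕ) + 1 ≥ 9 - R) → D i j = 0) :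
    8 ≥ 2 ^ (r - 1) * (R + C) := by
  obtain ⟨htri, h2, h0, h4, d, hd, hh⟩ := hstd
  exact final_bound hr hR hC D (⟨h2, h0, h4, hh⟩ : Gd D d) htri hd hzero
end

section
/- Let k be an algebraically closed field and S = k[x_1,...,x_r]. Suppose D = (p_{ij}) is an 8×8 matrix with entries in S satisfying the standard conditions, and suppose moreover that p_{ij} = 0 unless either (1 ≤ i ≤ 3 and 4 ≤ j ≤ 8) or (4 ≤ i ≤ 5 and 6 ≤ j ≤ 8). Then r < 2, i.e., r ≤ 1. -/
open MvPolynomial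

theorem aux_factor {R : Type*} [CommRing R] [IsDomain R] [UniqueFactorizationMonoid R]
    {n : ℕ} (A B : Fin n → R) (h : ∀ i j, A i * B j = B i * A j) :
    ∃ (u : Fin n → R) (s t : R), (∀ i, A i = u i * s) ∧ (∀ i, B i = u i * t) := by
  classical
  by_cases hA : ∀ i, A i = 0
  · exact ⟨B, 0, 1, by simpa using hA, by simp⟩
  push Not at hA
  obtain ⟨i, hi⟩ := hA
  obtain ⟨s, t, c, hrel, hs, ht⟩ :=
    UniqueFactorizationMonoid.exists_reduced_factors (A i) hi (B i)
  have hc : c ≠ 0 := by rintro rfl; simp at hs; exact hi hs.symm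
  have hs0 : s ≠ 0 := by rintro rfl; simp at hs; exact hi hs.symm
  have key : ∀ j, s * B j = t * A j := by
    intro j
    apply mul_left_cancel₀ hc
    have := h i j
    rw [← hs, ← ht] at this
    linear_combination this
  have hdvd : ∀ j, s ∣ A j := fun j => hrel.dvd_of_dvd_mul_left ⟨B j, (key j).symm⟩
  choose u hu using hdvd
  refine ⟨u, s, t, fun j => by rw [hu, mul_comm], fun j => ?_⟩
  apply mul_left_cancel₀ hs0
  rw [key, hu]
  ring

theorem aux_zero {k : Type*} [Field k] [IsAlgClosed k] {r : ℕ} (hr : 2 ≤ r)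
    (f : MvPolynomial (Fin r) k) (h0 : eval 0 f = 0) (h : ∀ a, a ≠ 0 → eval a f ≠ 0) : False := by
  classical
  let i0 : Fin r := ⟨0, by omega⟩
  let i1 : Fin r := ⟨1, by omega⟩
  have h01 : i1 ≠ i0 := by simp [i0, i1]
  let pt : k → k → Fin r → k := fun x y i => if i = i0 then x else if i = i1 then y else 0
  let P : k → Polynomial k := fun t =>
    aeval (fun i => if i = i0 then Polynomial.X else if i = i1 then Polynomial.C t else 0) f
  let Q : k → Polynomial k := fun s =>
    aeval (fun i => if i = i0 then Polynomial.C s else if i = i1 then Polynomial.X else 0) f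
  have hP : ∀ s t, (P t).eval s = eval (pt s t) f := by
    intro s t
    simp only [P]
    rw [← Polynomial.coe_evalRingHom, aeval_def, MvPolynomial.eval, hom_eval₂, eval₂_eq', coe_eval₂Hom, eval₂_eq']
    refine Finset.sum_congr rfl fun d _ => ?_
    congr 1
    · simp
    · refine Finset.prod_congr rfl fun i _ => ?_
      congr 1
      simp only [pt]
      split_ifs <;> simp
  have hQ : ∀ s t, (Q s).eval t = eval (pt s t) f := by
    intro s t
    simp only [Q]
    rw [← Polynomial.coe_evalRingHom, aeval_def, MvPolynomial.eval, hom_eval₂, eval₂_eq', coe_eval₂Hom, eval₂_eq']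
    refine Finset.sum_congr rfl fun d _ => ?_
    congr 1
    · simp
    · refine Finset.prod_congr rfl fun i _ => ?_
      congr 1
      simp only [pt]
      split_ifs <;> simp
  have hc : ∀ t, t ≠ 0 → eval (pt 1 t) f = eval (pt 0 t) f := by
    intro t ht
    have hd : (P t).degree = 0 := by
      by_contra hd
      obtain ⟨x, hx⟩ := IsAlgClosed.exists_root (P t) hd
      rw [Polynomial.IsRoot, hP] at hx
      refine h _ (fun e => ht ?_) hx
      have := congrFun e i1
      simpa [pt, h01] using this
    rw [← hP, ← hP, Polynomial.eq_C_of_degree_eq_zero hd]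
    simp
  have hQQ : Q 1 = Q 0 := by
    apply Polynomial.eq_of_infinite_eval_eq
    refine Set.Infinite.mono (s := {0}ᶜ) ?_ (Set.finite_singleton (0 : k)).infinite_compl
    intro t ht
    simp only [Set.mem_ofPred_eq, hQ]
    exact hc t ht
  have h1 := hQ 1 0
  rw [hQQ, hQ] at h1
  have e0 : pt 0 0 = 0 := by ext i; simp [pt]
  rw [e0, h0] at h1
  refine h _ (fun e => ?_) h1.symm
  have := congrFun e i0
  simp [pt] at this

theorem aux_rank {k : Type*} [Field k] {r n : ℕ}
    (D : Matrix (Fin 8) (Fin 8) (MvPolynomial (Fin r) k))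
    (P : Matrix (Fin 8) (Fin n) (MvPolynomial (Fin r) k))
    (Q : Matrix (Fin n) (Fin 8) (MvPolynomial (Fin r) k)) (h : D = P * Q) (a : Fin r → k) :
    (D.map (eval a)).rank ≤ n := by
  rw [h, Matrix.map_mul]
  refine (Matrix.rank_mul_le_left _ _).trans ?_
  simpa using Matrix.rank_le_width (P.map (eval a))

set_option maxHeartbeats 4000000 in
theorem aux_prod {R : Type*} [CommRing R] (D : Matrix (Fin 8) (Fin 8) R)
    (hzero : ∀ i j : Fin 8,
        ¬((1 ≤ (i : ℕ) + 1 ∧ (i : ℕ) + 1 ≤ 3 ∧ 4 ≤ (j : ℕ) + 1 ∧ (j : ℕ) + 1 ≤ 8) ∨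
          (4 ≤ (i : ℕ) + 1 ∧ (i : ℕ) + 1 ≤ 5 ∧ 6 ≤ (j : ℕ) + 1 ∧ (j : ℕ) + 1 ≤ 8)) →
        D i j = 0)
    (u z : Fin 3 → R) (s t p q : R)
    (a0 : D 0 3 = u 0 * s) (a1 : D 1 3 = u 1 * s) (a2 : D 2 3 = u 2 * s)
    (b0 : D 0 4 = u 0 * t) (b1 : D 1 4 = u 1 * t) (b2 : D 2 4 = u 2 * t)
    (c0 : D 3 5 = z 0 * p) (c1 : D 3 6 = z 1 * p) (c2 : D 3 7 = z 2 * p)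
    (d0 : D 4 5 = z 0 * q) (d1 : D 4 6 = z 1 * q) (d2 : D 4 7 = z 2 * q) :
    D = !![1, 0, 0, 0; 0, 1, 0, 0; 0, 0, 1, 0; 0, 0, 0, p; 0, 0, 0, q; 0, 0, 0, 0; 0, 0, 0, 0;
      0, 0, 0, 0] * (!![u 0, D 0 5, D 0 6, D 0 7; u 1, D 1 5, D 1 6, D 1 7;
      u 2, D 2 5, D 2 6, D 2 7; 0, z 0, z 1, z 2] *
      !![0, 0, 0, s, t, 0, 0, 0; 0, 0, 0, 0, 0, 1, 0, 0; 0, 0, 0, 0, 0, 0, 1, 0;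
      0, 0, 0, 0, 0, 0, 0, 1]) := by
  have hD : D = !![0, 0, 0, u 0 * s, u 0 * t, D 0 5, D 0 6, D 0 7;
      0, 0, 0, u 1 * s, u 1 * t, D 1 5, D 1 6, D 1 7;
      0, 0, 0, u 2 * s, u 2 * t, D 2 5, D 2 6, D 2 7;
      0, 0, 0, 0, 0, z 0 * p, z 1 * p, z 2 * p;
      0, 0, 0, 0, 0, z 0 * q, z 1 * q, z 2 * q;
      0, 0, 0, 0, 0, 0, 0, 0; 0, 0, 0, 0, 0, 0, 0, 0; 0, 0, 0, 0, 0, 0, 0, 0] := by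
    ext i j : 2
    fin_cases i <;> fin_cases j <;>
      first | rfl | exact hzero _ _ (by decide) | assumption
  generalize D 0 5 = x05 at *
  generalize D 0 6 = x06 at *
  generalize D 0 7 = x07 at *
  generalize D 1 5 = x15 at *
  generalize D 1 6 = x16 at *
  generalize D 1 7 = x17 at *
  generalize D 2 5 = x25 at *
  generalize D 2 6 = x26 at *
  generalize D 2 7 = x27 at *
  rw [hD]
  clear * -
  ext i j : 2
  simp only [Matrix.mul_apply, Fin.sum_univ_four]
  fin_cases i <;> fin_cases j <;> simp [mul_comm]

theorem statement_3 {k : Type*} [Field k] [IsAlgClosed k] {r : ℕ}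
    (D : Matrix (Fin 8) (Fin 8) (MvPolynomial (Fin r) k))
    (hstd : StandardConditions D)
    (hzero : ∀ i j : Fin 8,
        ¬((1 ≤ (i : ℕ) + 1 ∧ (i : ℕ) + 1 ≤ 3 ∧ 4 ≤ (j : ℕ) + 1 ∧ (j : ℕ) + 1 ≤ 8) ∨
          (4 ≤ (i : ℕ) + 1 ∧ (i : ℕ) + 1 ≤ 5 ∧ 6 ≤ (j : ℕ) + 1 ∧ (j : ℕ) + 1 ≤ 8)) →
        D i j = 0) :
    r < 2 := by
  by_contra hr
  push Not at hr
  obtain ⟨-, hsq, horig, hrank, -⟩ := hstd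
  have hone : (fun _ => 1 : Fin r → k) ≠ 0 := fun e => by
    have := congrFun e ⟨0, by omega⟩
    simp at this
  let ρ : Fin 3 → Fin 8 := ![0, 1, 2]
  let σ : Fin 3 → Fin 8 := ![5, 6, 7]
  have hAC : ∀ i j, D (ρ i) 3 * D 3 (σ j) + D (ρ i) 4 * D 4 (σ j) = 0 := by
    intro i j
    have h := congrFun (congrFun hsq (ρ i)) (σ j)
    rw [Matrix.mul_apply, Fin.sum_univ_eight] at h
    rw [hzero (ρ i) 0 (by fin_cases i <;> decide), hzero (ρ i) 1 (by fin_cases i <;> decide),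
      hzero (ρ i) 2 (by fin_cases i <;> decide), hzero 5 (σ j) (by fin_cases j <;> decide),
      hzero 6 (σ j) (by fin_cases j <;> decide), hzero 7 (σ j) (by fin_cases j <;> decide)] at h
    simpa using h
  -- `C` is nonzero
  have hC : ¬ ∀ j, D 3 (σ j) = 0 ∧ D 4 (σ j) = 0 := by
    intro hC
    have h := aux_rank D (Matrix.of fun i m => if i = ρ m then 1 else 0)
      (Matrix.of fun m j => D (ρ m) j) (by
      have h3 : ∀ i j : Fin 8, 3 ≤ i → D i j = 0 := by
        intro i j hi
        by_cases hj : (3 ≤ (i : ℕ) ∧ (i : ℕ) ≤ 4) ∧ 5 ≤ (j : ℕ)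
        · have hi' : i = 3 ∨ i = 4 := by omega
          have hj' : j = σ 0 ∨ j = σ 1 ∨ j = σ 2 := by
            simp only [σ]; simp; omega
          rcases hi' with rfl | rfl <;> rcases hj' with rfl | rfl | rfl
          all_goals first | exact (hC _).1 | exact (hC _).2
        · apply hzero
          have : 3 ≤ (i : ℕ) := hi
          omega
      refine Matrix.ext fun i j => ?_
      rw [Matrix.mul_apply, Fin.sum_univ_three]
      fin_cases i <;> simp [ρ] <;> apply h3 <;> decide) (fun _ => 1)
    have := hrank _ hone
    omega
  have hA : ¬ ∀ i, D (ρ i) 3 = 0 ∧ D (ρ i) 4 = 0 := by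
    intro hA
    have h := aux_rank D (Matrix.of fun i m => D i (σ m))
      (Matrix.of fun m j => if j = σ m then 1 else 0) (by
      have h3 : ∀ i j : Fin 8, j ≤ 4 → D i j = 0 := by
        intro i j hj
        have hj0 : (j : ℕ) ≤ 4 := hj
        by_cases hi : (i : ℕ) ≤ 2 ∧ 3 ≤ (j : ℕ)
        · have hj' : j = 3 ∨ j = 4 := by omega
          have hi' : i = ρ 0 ∨ i = ρ 1 ∨ i = ρ 2 := by
            simp only [ρ]; simp; omega
          rcases hj' with rfl | rfl <;> rcases hi' with rfl | rfl | rfl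
          all_goals first | exact (hA _).1 | exact (hA _).2
        · apply hzero
          omega
      refine Matrix.ext fun i j => ?_
      rw [Matrix.mul_apply, Fin.sum_univ_three]
      fin_cases j <;> simp [σ] <;> apply h3 <;> decide) (fun _ => 1)
    have := hrank _ hone
    omega
  have hmA : ∀ i l, D (ρ i) 3 * D (ρ l) 4 = D (ρ i) 4 * D (ρ l) 3 := by
    intro i l
    by_contra hne
    apply hC
    intro j
    have hne' := sub_ne_zero.2 hne
    constructor
    · apply (mul_eq_zero.1 _).resolve_left hne'
      linear_combination D (ρ l) 4 * hAC i j - D (ρ i) 4 * hAC l j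
    · apply (mul_eq_zero.1 _).resolve_left hne'
      linear_combination D (ρ i) 3 * hAC l j - D (ρ l) 3 * hAC i j
  have hmC : ∀ i l, D 3 (σ i) * D 4 (σ l) = D 4 (σ i) * D 3 (σ l) := by
    intro i l
    by_contra hne
    apply hA
    intro j
    have hne' := sub_ne_zero.2 hne
    constructor
    · apply (mul_eq_zero.1 _).resolve_left hne'
      linear_combination D 4 (σ l) * hAC j i - D 4 (σ i) * hAC j l
    · apply (mul_eq_zero.1 _).resolve_left hne'
      linear_combination D 3 (σ i) * hAC j l - D 3 (σ l) * hAC j i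
  obtain ⟨u, s, t, hus, hut⟩ := aux_factor _ _ hmA
  obtain ⟨z, p, q, hzp, hzq⟩ := aux_factor _ _ hmC
  let N : Matrix (Fin 4) (Fin 4) (MvPolynomial (Fin r) k) :=
    !![u 0, D 0 5, D 0 6, D 0 7; u 1, D 1 5, D 1 6, D 1 7; u 2, D 2 5, D 2 6, D 2 7;
      0, z 0, z 1, z 2]
  let P : Matrix (Fin 8) (Fin 4) (MvPolynomial (Fin r) k) :=
    !![1, 0, 0, 0; 0, 1, 0, 0; 0, 0, 1, 0; 0, 0, 0, p; 0, 0, 0, q; 0, 0, 0, 0; 0, 0, 0, 0;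
      0, 0, 0, 0]
  let Q : Matrix (Fin 4) (Fin 8) (MvPolynomial (Fin r) k) :=
    !![0, 0, 0, s, t, 0, 0, 0; 0, 0, 0, 0, 0, 1, 0, 0; 0, 0, 0, 0, 0, 0, 1, 0;
      0, 0, 0, 0, 0, 0, 0, 1]
  have hD : D = P * (N * Q) := by
    have a0 := hus 0
    have a1 := hus 1
    have a2 := hus 2
    have b0 := hut 0
    have b1 := hut 1
    have b2 := hut 2
    have c0 := hzp 0
    have c1 := hzp 1
    have c2 := hzp 2
    have d0 := hzq 0
    have d1 := hzq 1
    have d2 := hzq 2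
    simp [ρ, σ] at a0 a1 a2 b0 b1 b2 c0 c1 c2 d0 d1 d2
    exact aux_prod D hzero _ _ _ _ _ _ a0 a1 a2 b0 b1 b2 c0 c1 c2 d0 d1 d2
  refine aux_zero hr N.det ?_ ?_
  · have horig' : ∀ i j, constantCoeff (D i j) = 0 := fun i j => by simpa using horig i j
    simp [N, Matrix.det_succ_row_zero, Fin.sum_univ_succ, Fin.succAbove, horig']
  · intro a ha hdet
    have h4 := hrank a ha
    rw [hD, Matrix.map_mul, Matrix.map_mul] at h4
    have h5 : 4 ≤ (N.map (eval a)).rank := by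
      refine h4.symm.le.trans ?_
      exact (Matrix.rank_mul_le_right _ _).trans (Matrix.rank_mul_le_left _ _)
    have h6 : (N.map (eval a)).det = 0 := by
      rw [← hdet, RingHom.map_det]; rfl
    obtain ⟨v, hv, hv0⟩ := Matrix.exists_mulVec_eq_zero_iff.2 h6
    have h7 := (N.map (eval a)).mulVecLin.finrank_range_add_finrank_ker
    rw [Matrix.rank] at h5
    simp at h7
    have h8 : 0 < Module.finrank k (LinearMap.ker (N.map (eval a)).mulVecLin) := by
      rw [Module.finrank_pos_iff_exists_ne_zero]
      exact ⟨⟨v, by simpa using hv0⟩, fun e => hv (congrArg Subtype.val e)⟩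
    omega
end

section
/- Let k be an algebraically closed field and S = k[x_1,...,x_r]. Suppose D = (p_{ij}) is an 8×8 matrix with entries in S satisfying the standard conditions, and suppose moreover that either: (A) p_{ij} = 0 unless (1 ≤ i ≤ 2 and 3 ≤ j ≤ 8) or (3 ≤ i ≤ 4 and 5 ≤ j ≤ 8) or (5 ≤ i ≤ 7 and j = 8); or (B) p_{ij} = 0 unless (i = 1 and 2 ≤ j ≤ 8) or (2 ≤ i ≤ 4 and 5 ≤ j ≤ 8) or (5 ≤ i ≤ 6 and 7 ≤ j ≤ 8). Then r < 3, i.e., r ≤ 2. -/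
open MvPolynomial

/-- powers of distinct variables are regular modulo each other -/
lemma aux_regular_s4 {k : Type*} [Field k] {r : ℕ} (K : ℕ) (T : Set (Fin r)) (l : Fin r) (hl : l ∉ T)
    (w : MvPolynomial (Fin r) k)
    (h : X l ^ K * w ∈ Ideal.span (Set.image (fun s => monomial s (1 : k))
      (Set.image (fun i => Finsupp.single i K) T))) :
    w ∈ Ideal.span (Set.image (fun s => monomial s (1 : k)) (Set.image (fun i => Finsupp.single i K) T)) := by
  rw [mem_ideal_span_monomial_image] at h ⊢
  intro m hm
  have h1 : Finsupp.single l K + m ∈ (X l ^ K * w).support := by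
    rw [mem_support_iff] at hm ⊢
    rw [X_pow_eq_monomial, coeff_monomial_mul]
    simpa using hm
  obtain ⟨s, hs, hle⟩ := h _ h1
  refine ⟨s, hs, ?_⟩
  obtain ⟨i, hi, rfl⟩ := hs
  have hne : l ≠ i := fun e => hl (e ▸ hi)
  have h2 := hle i
  simp only [Finsupp.single_le_iff]
  simpa [Finsupp.single_apply, hne] using h2

lemma aux_dvd {k : Type*} [Field k] {r : ℕ} (K : ℕ) {i l : Fin r} (hl : l ≠ i)
    (w z : MvPolynomial (Fin r) k) (h : X l ^ K * w = X i ^ K * z) : ∃ y, w = X i ^ K * y := by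
  have := aux_regular_s4 K {i} l (by simpa using hl) w (by
    rw [h]
    simp only [Set.image_singleton, ← X_pow_eq_monomial]
    exact Ideal.mul_mem_right _ _ (Ideal.subset_span rfl))
  simp only [Set.image_singleton, ← X_pow_eq_monomial] at this
  obtain ⟨y, hy⟩ := Ideal.mem_span_singleton'.1 this
  exact ⟨y, by rw [← hy, mul_comm]⟩

lemma aux_two {k : Type*} [Field k] {r : ℕ} (K : ℕ) {i j l : Fin r} (hi : l ≠ i) (hj : l ≠ j)
    (w z t : MvPolynomial (Fin r) k) (h : X l ^ K * w = X i ^ K * z + X j ^ K * t) :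
    ∃ y x, w = X i ^ K * y + X j ^ K * x := by
  have := aux_regular_s4 K {i, j} l (by simp [hi, hj]) w (by
    rw [h]
    simp only [Set.image_pair, ← X_pow_eq_monomial]
    exact Ideal.add_mem _ (Ideal.mul_mem_right _ _ (Ideal.subset_span (by simp)))
      (Ideal.mul_mem_right _ _ (Ideal.subset_span (by simp))))
  simp only [Set.image_pair, ← X_pow_eq_monomial] at this
  obtain ⟨y, x, hy⟩ := Ideal.mem_span_pair.1 this
  exact ⟨y, x, by rw [← hy]; ring⟩

/-- signed maximal minors of an `n × (n+1)` matrix -/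
def sminor {R : Type*} [CommRing R] {n : ℕ} (N : Matrix (Fin n) (Fin (n + 1)) R)
    (j : Fin (n + 1)) : R := (-1) ^ (j : ℕ) * (N.submatrix id j.succAbove).det

def consM {R : Type*} {n : ℕ} (c : Fin (n + 1) → R) (N : Matrix (Fin n) (Fin (n + 1)) R) :
    Matrix (Fin (n + 1)) (Fin (n + 1)) R := Matrix.of (Fin.cons c N : Fin (n + 1) → Fin (n + 1) → R)

@[simp] lemma consM_zero {R : Type*} {n : ℕ} (c : Fin (n + 1) → R)
    (N : Matrix (Fin n) (Fin (n + 1)) R) (j : Fin (n + 1)) : consM c N 0 j = c j := rfl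

@[simp] lemma consM_succ {R : Type*} {n : ℕ} (c : Fin (n + 1) → R)
    (N : Matrix (Fin n) (Fin (n + 1)) R) (i : Fin n) (j : Fin (n + 1)) :
    consM c N i.succ j = N i j := rfl

lemma consM_sub {R : Type*} {n : ℕ} (c : Fin (n + 1) → R) (N : Matrix (Fin n) (Fin (n + 1)) R)
    (j : Fin (n + 1)) :
    (consM c N).submatrix Fin.succ j.succAbove = N.submatrix id j.succAbove := by
  ext a b
  simp

lemma det_consM {R : Type*} [CommRing R] {n : ℕ} (c : Fin (n + 1) → R)
    (N : Matrix (Fin n) (Fin (n + 1)) R) : (consM c N).det = ∑ j, c j * sminor N j := by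
  rw [Matrix.det_succ_row_zero]
  refine Finset.sum_congr rfl fun j _ => ?_
  rw [consM_sub, sminor]
  simp only [consM_zero]
  ring

lemma sum_row_sminor {R : Type*} [CommRing R] {n : ℕ} 
    (N : Matrix (Fin n) (Fin (n + 1)) R) (i : Fin n) : ∑ j, N i j * sminor N j = 0 := by
  rw [← det_consM]
  apply Matrix.det_zero_of_row_eq (i := 0) (j := i.succ) (Fin.succ_ne_zero i).symm
  ext b
  simp

lemma sum_vecMul_sminor {R : Type*} [CommRing R] {n : ℕ} 
    (N : Matrix (Fin n) (Fin (n + 1)) R) (c : Fin n → R) :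
    ∑ j, (Matrix.vecMul c N) j * sminor N j = 0 := by
  have : ∀ j, (Matrix.vecMul c N) j * sminor N j = ∑ i, c i * (N i j * sminor N j) := by
    intro j
    rw [Matrix.vecMul, dotProduct, Finset.sum_mul]
    exact Finset.sum_congr rfl fun i _ => by ring
  simp_rw [this]
  rw [Finset.sum_comm]
  refine Finset.sum_eq_zero fun i _ => ?_
  rw [← Finset.mul_sum, sum_row_sminor, mul_zero]

lemma sminor_smul_mem {R : Type*} [CommRing R] {n : ℕ} (c : Fin (n + 1) → R)
    (N : Matrix (Fin n) (Fin (n + 1)) R) (h : ∑ j, c j * sminor N j = 0) (j : Fin (n + 1)) :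
    ∃ l : Fin n → R, sminor N j • c = Matrix.vecMul l N := by
  rw [← det_consM] at h
  have h1 := Matrix.adjugate_mul (consM c N)
  rw [h, zero_smul] at h1
  refine ⟨fun i => - (consM c N).adjugate j i.succ, ?_⟩
  ext b
  have h2 := congrFun (congrFun h1 j) b
  rw [Matrix.mul_apply, Fin.sum_univ_succ, Matrix.adjugate_fin_succ_eq_det_submatrix] at h2
  simp only [Fin.succAbove_zero, Matrix.zero_apply] at h2
  rw [consM_sub] at h2
  simp only [consM_zero, consM_succ, Fin.val_zero, zero_add] at h2
  simp only [Pi.smul_apply, smul_eq_mul, Matrix.vecMul, dotProduct, sminor, neg_mul,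
    Finset.sum_neg_distrib]
  exact eq_neg_of_add_eq_zero_left h2

lemma vecMul_inj {R : Type*} [CommRing R] [IsDomain R] {n : ℕ}
    (N : Matrix (Fin n) (Fin (n + 1)) R) (j : Fin (n + 1)) (hj : sminor N j ≠ 0) (c : Fin n → R)
    (h : Matrix.vecMul c N = 0) : c = 0 := by
  apply Matrix.eq_zero_of_vecMul_eq_zero (M := N.submatrix id j.succAbove)
  · intro h0; apply hj; rw [sminor, h0, mul_zero]
  · ext b
    exact congrFun h (j.succAbove b)

/-- Hilbert–Burch/Koszul: maximal minors of an `n × (n+1)` matrix, all vanishing at the origin,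
have another common zero if `r ≥ 3`. -/
theorem minors_zero {k : Type*} [Field k] [IsAlgClosed k] {r : ℕ} (hr : 3 ≤ r) {n : ℕ}
    (N : Matrix (Fin n) (Fin (n + 1)) (MvPolynomial (Fin r) k))
    (h0 : ∀ j, eval 0 (sminor N j) = 0)
    (h1 : ∀ a : Fin r → k, a ≠ 0 → ∃ j, eval a (sminor N j) ≠ 0) : False := by
  -- every variable is in the radical
  set J := Ideal.span (Set.range (sminor N)) with hJ
  have hrad : ∀ i : Fin r, ∃ K : ℕ, (X i : MvPolynomial (Fin r) k) ^ K ∈ J := by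
    intro i
    have : (X i : MvPolynomial (Fin r) k) ∈ J.radical := by
      rw [← vanishingIdeal_zeroLocus_eq_radical (K := k), mem_vanishingIdeal_iff]
      intro a ha
      have : a = 0 := by
        by_contra hne
        obtain ⟨j, hj⟩ := h1 a hne
        apply hj
        have := ha (sminor N j) (Ideal.subset_span ⟨j, rfl⟩)
        simpa [aeval_eq_eval] using this
      simp [this]
    exact this
  choose Kf hKf using hrad
  obtain ⟨K, hK⟩ : ∃ K : ℕ, ∀ i : Fin r, (X i : MvPolynomial (Fin r) k) ^ K ∈ J :=
    ⟨Finset.univ.sup Kf, fun i =>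
      Ideal.pow_mem_of_pow_mem _ (hKf i) (Finset.le_sup (f := Kf) (Finset.mem_univ i))⟩
  have hco : ∀ i : Fin r, ∃ c : Fin (n + 1) → MvPolynomial (Fin r) k,
      ∑ j, c j * sminor N j = X i ^ K := by
    intro i
    have := hK i
    rw [hJ, Ideal.mem_span_range_iff_exists_fun] at this
    exact this
  choose α hα using hco
  let i1 : Fin r := ⟨0, by omega⟩
  let i2 : Fin r := ⟨1, by omega⟩
  let i3 : Fin r := ⟨2, by omega⟩
  have h12 : i1 ≠ i2 := by simp [i1, i2]
  have h13 : i1 ≠ i3 := by simp [i1, i3]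
  have h23 : i2 ≠ i3 := by simp [i2, i3]
  have hX : ∀ i : Fin r, (X i : MvPolynomial (Fin r) k) ^ K ≠ 0 := fun i => pow_ne_zero _ (X_ne_zero i)
  obtain ⟨j0, hj0⟩ : ∃ j, sminor N j ≠ 0 := by
    by_contra hcon
    push Not at hcon
    apply hX i1
    rw [← hα i1]
    simp [hcon]
  have inj : ∀ c : Fin n → MvPolynomial (Fin r) k, Matrix.vecMul c N = 0 → c = 0 :=
    fun c hc => vecMul_inj N j0 hj0 c hc
  -- powers of variables kill the homology
  have hkill : ∀ c : Fin (n + 1) → MvPolynomial (Fin r) k, ∑ j, c j * sminor N j = 0 → ∀ i,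
      ∃ l, (X i : MvPolynomial (Fin r) k) ^ K • c = Matrix.vecMul l N := by
    intro c hc i
    choose l hl using sminor_smul_mem c N hc
    refine ⟨∑ j, α i j • l j, ?_⟩
    rw [← hα i, Finset.sum_smul, Matrix.sum_vecMul]
    refine Finset.sum_congr rfl fun j _ => ?_
    rw [Matrix.smul_vecMul, ← hl, smul_smul]
  have hsyz : ∀ c : Fin (n + 1) → MvPolynomial (Fin r) k, ∑ j, c j * sminor N j = 0 →
      ∃ l, c = Matrix.vecMul l N := by
    intro c hc
    obtain ⟨l1, hl1⟩ := hkill c hc i1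
    obtain ⟨l2, hl2⟩ := hkill c hc i2
    have e : (X i2 : MvPolynomial (Fin r) k) ^ K • l1 - (X i1 : MvPolynomial (Fin r) k) ^ K • l2 = 0 := by
      apply inj
      rw [Matrix.sub_vecMul, Matrix.smul_vecMul, Matrix.smul_vecMul, ← hl1, ← hl2, smul_smul,
        smul_smul, mul_comm, sub_self]
    have : ∀ q, ∃ y, l1 q = X i1 ^ K * y := by
      intro q
      apply aux_dvd K h12.symm _ (l2 q)
      simpa [sub_eq_zero] using congrFun e q
    choose l hl using this
    refine ⟨l, ?_⟩
    have e1 : l1 = (X i1 : MvPolynomial (Fin r) k) ^ K • l := by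
      ext1 q; simp [hl]
    rw [e1, Matrix.smul_vecMul] at hl1
    exact smul_right_injective _ (hX i1) hl1
  have hlam : ∀ i i', ∃ l, (X i : MvPolynomial (Fin r) k) ^ K • α i' -
      (X i' : MvPolynomial (Fin r) k) ^ K • α i = Matrix.vecMul l N := by
    intro i i'
    apply hsyz
    simp only [Pi.sub_apply, Pi.smul_apply, smul_eq_mul, sub_mul, mul_assoc,
      Finset.sum_sub_distrib, ← Finset.mul_sum, hα]
    ring
  obtain ⟨l12, hl12⟩ := hlam i1 i2
  obtain ⟨l13, hl13⟩ := hlam i1 i3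
  obtain ⟨l23, hl23⟩ := hlam i2 i3
  have e : (X i3 : MvPolynomial (Fin r) k) ^ K • l12 - (X i2 : MvPolynomial (Fin r) k) ^ K • l13
      + (X i1 : MvPolynomial (Fin r) k) ^ K • l23 = 0 := by
    apply inj
    rw [Matrix.add_vecMul, Matrix.sub_vecMul, Matrix.smul_vecMul, Matrix.smul_vecMul,
      Matrix.smul_vecMul, ← hl12, ← hl13, ← hl23]
    ext1 q
    simp only [Pi.sub_apply, Pi.smul_apply, smul_eq_mul, Pi.add_apply, Pi.zero_apply]
    ring
  have : ∀ q, ∃ y x, l12 q = X i1 ^ K * y + X i2 ^ K * x := by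
    intro q
    apply aux_two K h13.symm h23.symm _ (- l23 q) (l13 q)
    have := congrFun e q
    simp only [Pi.sub_apply, Pi.smul_apply, smul_eq_mul, Pi.add_apply, Pi.zero_apply] at this
    linear_combination this
  choose κ2 κ1 hκ using this
  have hκ' : l12 = (X i1 : MvPolynomial (Fin r) k) ^ K • κ2 +
      (X i2 : MvPolynomial (Fin r) k) ^ K • κ1 := by
    ext1 q; simp [hκ]
  rw [hκ', Matrix.add_vecMul, Matrix.smul_vecMul, Matrix.smul_vecMul] at hl12
  have : ∀ q, ∃ y, (α i1 + Matrix.vecMul κ1 N) q = X i1 ^ K * y := by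
    intro q
    apply aux_dvd K h12.symm _ ((α i2 - Matrix.vecMul κ2 N) q)
    have := congrFun hl12 q
    simp only [Pi.sub_apply, Pi.smul_apply, smul_eq_mul, Pi.add_apply] at this ⊢
    linear_combination -this
  choose γ hγ using this
  have h5 : (X i1 : MvPolynomial (Fin r) k) ^ K * ∑ j, γ j * sminor N j = X i1 ^ K * 1 := by
    rw [mul_one, Finset.mul_sum]
    have h8 : ∀ j, (X i1 : MvPolynomial (Fin r) k) ^ K * (γ j * sminor N j) =
        α i1 j * sminor N j + Matrix.vecMul κ1 N j * sminor N j := by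
      intro j
      rw [← mul_assoc, ← hγ, Pi.add_apply, add_mul]
    simp_rw [h8]
    rw [Finset.sum_add_distrib, sum_vecMul_sminor, add_zero, hα]
  have h6 := mul_left_cancel₀ (hX i1) h5
  have h7 := congrArg (eval (0 : Fin r → k)) h6
  rw [map_sum, map_one] at h7
  simp only [map_mul, h0, mul_zero, Finset.sum_const_zero] at h7
  exact zero_ne_one h7

/-- full rank implies a nonzero maximal minor -/
lemma exists_sminor {k : Type*} [Field k] {n : ℕ} (N : Matrix (Fin n) (Fin (n + 1)) k)
    (h : n ≤ N.rank) : ∃ j, sminor N j ≠ 0 := by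
  by_contra hcon
  push Not at hcon
  have hli : LinearIndependent k N.row := by
    rw [linearIndependent_iff_card_le_finrank_span, Set.finrank, ← Matrix.rank_eq_finrank_span_row]
    simpa using h
  obtain ⟨c, hc⟩ : ∃ c, c ∉ Submodule.span k (Set.range N.row) := by
    by_contra hall
    push Not at hall
    have htop : Submodule.span k (Set.range N.row) = ⊤ := by
      rw [eq_top_iff]; intro x _; exact hall x
    have h1 := N.rank_eq_finrank_span_row
    rw [htop, finrank_top, Module.finrank_fin_fun] at h1
    have := N.rank_le_height
    omega
  have h2 : LinearIndependent k (consM c N).row := linearIndependent_finCons.2 ⟨hli, hc⟩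
  rw [Matrix.linearIndependent_rows_iff_isUnit, Matrix.isUnit_iff_isUnit_det, det_consM] at h2
  simp [hcon] at h2

lemma eval_sminor {k : Type*} [Field k] {r n : ℕ} (a : Fin r → k)
    (N : Matrix (Fin n) (Fin (n + 1)) (MvPolynomial (Fin r) k)) (j) :
    eval a (sminor N j) = sminor (N.map (eval a)) j := by
  simp only [sminor, map_mul, map_pow, map_neg, map_one, RingHom.map_det]
  rfl

theorem rank_drop {k : Type*} [Field k] [IsAlgClosed k] {r : ℕ} (hr : 3 ≤ r) {n : ℕ} (hn : 0 < n)
    (N : Matrix (Fin n) (Fin (n + 1)) (MvPolynomial (Fin r) k))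
    (h0 : ∀ i j, eval 0 (N i j) = 0)
    (h1 : ∀ a : Fin r → k, a ≠ 0 → n ≤ (N.map (eval a)).rank) : False := by
  apply minors_zero hr N
  · intro j
    rw [eval_sminor]
    have : N.map (eval 0) = 0 := by ext i j; exact h0 i j
    rw [this, sminor, Matrix.submatrix_zero]
    have : Nonempty (Fin n) := ⟨⟨0, hn⟩⟩
    simp
  · intro a ha
    obtain ⟨j, hj⟩ := exists_sminor _ (h1 a ha)
    exact ⟨j, by rwa [eval_sminor]⟩

lemma mat_rank_zero {k : Type*} [Field k] {m n : ℕ} (M : Matrix (Fin m) (Fin n) k)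
    (h : M.rank = 0) : M = 0 := by
  rw [Matrix.rank_eq_finrank_span_row, Submodule.finrank_eq_zero, Submodule.span_eq_bot] at h
  ext1 i j
  exact congrFun (h _ ⟨i, rfl⟩) j

lemma mat_rank_add_le {k : Type*} [Field k] {m n : ℕ} (M N : Matrix (Fin m) (Fin n) k) :
    (M + N).rank ≤ M.rank + N.rank := by
  unfold Matrix.rank
  rw [Matrix.mulVecLin_add]
  refine (Submodule.finrank_mono (LinearMap.range_add_le _ _)).trans ?_
  exact Submodule.finrank_add_le_finrank_add_finrank _ _

lemma pair_factor {R : Type*} [CommRing R] [IsDomain R] [UniqueFactorizationMonoid R] (a b : R)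
    (h : a ≠ 0 ∨ b ≠ 0) : ∃ v w g : R, IsRelPrime v w ∧ g * v = a ∧ g * w = b ∧ g ≠ 0 := by
  rcases h with h | h
  · obtain ⟨v, w, g, h1, h2, h3⟩ := UniqueFactorizationMonoid.exists_reduced_factors a h b
    exact ⟨v, w, g, h1, h2, h3, by rintro rfl; simp at h2; exact h h2.symm⟩
  · obtain ⟨v, w, g, h1, h2, h3⟩ := UniqueFactorizationMonoid.exists_reduced_factors' a b h
    exact ⟨v, w, g, h1, h2, h3, by rintro rfl; simp at h3; exact h h3.symm⟩

lemma pair_prop {R : Type*} [CommRing R] [IsDomain R] [UniqueFactorizationMonoid R] (v w c d : R)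
    (h : IsRelPrime v w) (e : c * w = d * v) : ∃ g, c = g * v ∧ d = g * w := by
  by_cases hv : v = 0
  · subst hv
    have hw : IsUnit w := isRelPrime_zero_left.1 h
    obtain ⟨w', hw'⟩ := hw.exists_right_inv
    refine ⟨d * w', ?_, by linear_combination (-d) * hw'⟩
    linear_combination w' * e - c * hw'
  · obtain ⟨g, hg⟩ : v ∣ c := h.dvd_of_dvd_mul_right ⟨d, by rw [e, mul_comm]⟩
    refine ⟨g, by rw [hg, mul_comm], ?_⟩
    apply mul_left_cancel₀ hv
    rw [hg] at e
    linear_combination -e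

lemma rank_B_zero {k : Type*} [Field k] (A : Matrix (Fin 2) (Fin 2) k)
    (Y : Matrix (Fin 2) (Fin 3) k) : (Matrix.fromBlocks A Y 0 (0 : Matrix (Fin 2) (Fin 3) k)).rank < 3 := by
  have : Matrix.fromBlocks A Y 0 (0 : Matrix (Fin 2) (Fin 3) k) =
      Matrix.fromRows (1 : Matrix (Fin 2) (Fin 2) k) (0 : Matrix (Fin 2) (Fin 2) k) *
        Matrix.fromCols A Y := by
    rw [Matrix.fromRows_mul_fromCols]; simp
  rw [this]
  have h1 := Matrix.rank_mul_le_left (Matrix.fromRows (1 : Matrix (Fin 2) (Fin 2) k) (0 : Matrix (Fin 2) (Fin 2) k)) (Matrix.fromCols A Y)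
  have h2 := Matrix.rank_le_card_width (Matrix.fromRows (1 : Matrix (Fin 2) (Fin 2) k) (0 : Matrix (Fin 2) (Fin 2) k))
  rw [Fintype.card_fin] at h2
  omega

lemma exists_point {k : Type*} [Field k] {r : ℕ} (hr : 3 ≤ r) : ∃ a : Fin r → k, a ≠ 0 :=
  ⟨fun _ => 1, fun h => one_ne_zero (congrFun h ⟨0, by omega⟩)⟩

theorem block_case {k : Type*} [Field k] [IsAlgClosed k] {r : ℕ} (hr : 3 ≤ r)
    (A : Matrix (Fin 2) (Fin 2) (MvPolynomial (Fin r) k))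
    (Y B : Matrix (Fin 2) (Fin 3) (MvPolynomial (Fin r) k))
    (hAB : A * B = 0)
    (hA0 : ∀ i j, eval 0 (A i j) = 0) (hY0 : ∀ i j, eval 0 (Y i j) = 0)
    (hB0 : ∀ i j, eval 0 (B i j) = 0)
    (h : ∀ a : Fin r → k, a ≠ 0 →
      3 ≤ (Matrix.fromBlocks (A.map (eval a)) (Y.map (eval a)) 0 (B.map (eval a))).rank) :
    False := by
  by_cases hA : A = 0
  · -- use the 4 × 3 matrix
    subst hA
    apply rank_drop hr (n := 3) (by norm_num)
      ((Matrix.fromRows Y B).submatrix (finSumFinEquiv (m := 2) (n := 2)).symm id).transpose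
    · intro i j
      simp only [Matrix.transpose_apply, Matrix.submatrix_apply, id]
      rcases (finSumFinEquiv (m := 2) (n := 2)).symm j with j | j
      · exact hY0 _ _
      · exact hB0 _ _
    · intro a ha
      rw [Matrix.transpose_map, Matrix.rank_transpose]
      have e : ((Matrix.fromRows Y B).submatrix (finSumFinEquiv (m := 2) (n := 2)).symm id).map (eval a)
        = (Matrix.fromRows (Y.map (eval a)) (B.map (eval a))).submatrix
            (finSumFinEquiv (m := 2) (n := 2)).symm (Equiv.refl _) := by
        ext i j
        simp only [Matrix.map_apply, Matrix.submatrix_apply, id, Equiv.refl_apply]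
        rcases (finSumFinEquiv (m := 2) (n := 2)).symm i with j | j <;> rfl
      rw [e, Matrix.rank_submatrix]
      refine (h a ha).trans ?_
      have e2 : Matrix.fromBlocks ((0 : Matrix (Fin 2) (Fin 2) (MvPolynomial (Fin r) k)).map (eval a))
          (Y.map (eval a)) 0 (B.map (eval a)) =
          Matrix.fromRows (Y.map (eval a)) (B.map (eval a)) *
            Matrix.fromCols (0 : Matrix (Fin 3) (Fin 2) k) (1 : Matrix (Fin 3) (Fin 3) k) := by
        rw [Matrix.fromRows_mul_fromCols]; simp
      rw [e2]
      exact Matrix.rank_mul_le_left _ _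
  by_cases hdet : A.det = 0
  swap
  · have hB : B = 0 := by
      have h1 : A.adjugate * (A * B) = 0 := by rw [hAB, Matrix.mul_zero]
      rw [← Matrix.mul_assoc, Matrix.adjugate_mul, Matrix.smul_mul, Matrix.one_mul] at h1
      exact (smul_eq_zero.1 h1).resolve_left hdet
    obtain ⟨a, ha⟩ := exists_point (k := k) hr
    have h1 := h a ha
    rw [hB, Matrix.map_zero _ (map_zero _)] at h1
    exact absurd h1 (not_le.2 (rank_B_zero _ _))
  -- factor `A`
  obtain ⟨u, v, hv, hu, huv⟩ : ∃ u v : Fin 2 → MvPolynomial (Fin r) k, IsRelPrime (v 0) (v 1) ∧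
      u ≠ 0 ∧ ∀ i j, A i j = u i * v j := by
    rw [Matrix.det_fin_two] at hdet
    by_cases hrow : A 0 0 ≠ 0 ∨ A 0 1 ≠ 0
    · obtain ⟨v, w, g, h1, h2, h3, h4⟩ := pair_factor _ _ hrow
      obtain ⟨t, ht1, ht2⟩ := pair_prop v w (A 1 0) (A 1 1) h1 (by
        apply mul_left_cancel₀ h4
        linear_combination (-hdet) + A 1 0 * h3 - A 1 1 * h2)
      refine ⟨![g, t], ![v, w], h1, fun e => h4 (by simpa using congrFun e 0), ?_⟩
      intro i j
      fin_cases i <;> fin_cases j <;> simp [h2, h3, ht1, ht2]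
    · push Not at hrow
      have hrow' : A 1 0 ≠ 0 ∨ A 1 1 ≠ 0 := by
        by_contra hc
        push Not at hc
        apply hA
        ext1 i j
        fin_cases i <;> fin_cases j <;> simp [hrow, hc]
      obtain ⟨v, w, g, h1, h2, h3, h4⟩ := pair_factor _ _ hrow'
      refine ⟨![0, g], ![v, w], h1, fun e => h4 (by simpa using congrFun e 1), ?_⟩
      intro i j
      fin_cases i <;> fin_cases j <;> simp [h2, h3, hrow]
  have hvB : ∀ j, v 0 * B 0 j + v 1 * B 1 j = 0 := by
    intro j
    obtain ⟨i, hi⟩ := Function.ne_iff.1 hu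
    apply mul_left_cancel₀ hi
    have := congrFun (congrFun hAB i) j
    rw [Matrix.mul_apply, Fin.sum_univ_two, huv, huv] at this
    simp only [Matrix.zero_apply] at this
    rw [mul_zero]
    linear_combination this
  have hb : ∀ j, ∃ b, B 1 j = b * v 0 ∧ - B 0 j = b * v 1 := by
    intro j
    apply pair_prop _ _ _ _ hv
    linear_combination hvB j
  choose b hb1 hb2 using hb
  have hvne : ∀ a : Fin r → k, a ≠ 0 → eval a (v 0) ≠ 0 ∨ eval a (v 1) ≠ 0 := by
    intro a ha
    by_contra hc
    push Not at hc
    have h1 := h a ha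
    have hB : B.map (eval a) = 0 := by
      ext i j
      have e0 : eval a (B 0 j) = 0 := by
        have := congrArg (eval a) (hb2 j)
        simpa [hc] using this
      have e1 : eval a (B 1 j) = 0 := by simp [hb1, hc]
      fin_cases i
      · exact e0
      · exact e1
    rw [hB] at h1
    exact absurd h1 (not_le.2 (rank_B_zero _ _))
  have hv0 : ∃ j, eval 0 (v j) ≠ 0 := by
    by_contra hc
    push Not at hc
    apply rank_drop hr (n := 1) (by norm_num) (Matrix.of fun _ j => v j)
    · intro i j; exact hc j
    · intro a ha
      by_contra hlt
      have : (Matrix.of (fun (_ : Fin 1) j => v j)).map (eval a) = 0 :=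
        mat_rank_zero _ (Nat.lt_one_iff.1 (not_le.1 hlt))
      have e0 := congrFun (congrFun this 0) 0
      have e1 := congrFun (congrFun this 0) 1
      rcases hvne a ha with h1 | h1
      · exact h1 e0
      · exact h1 e1
  obtain ⟨j0, hj0⟩ := hv0
  have hu0 : ∀ i, eval 0 (u i) = 0 := by
    intro i
    have := hA0 i j0
    rw [huv, map_mul] at this
    exact (mul_eq_zero.1 this).resolve_right hj0
  have hb0 : ∀ j, eval 0 (b j) = 0 := by
    intro j
    have e1 := hB0 1 j
    have e2 := hB0 0 j
    have e3 := congrArg (eval 0) (hb2 j)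
    rw [map_neg, e2, neg_zero, map_mul] at e3
    rw [hb1, map_mul] at e1
    fin_cases j0
    · exact (mul_eq_zero.1 e1).resolve_right hj0
    · exact (mul_eq_zero.1 e3.symm).resolve_right hj0
  -- the 3 × 4 matrix
  let N : Matrix (Fin 2 ⊕ Fin 1) (Fin 1 ⊕ Fin 3) (MvPolynomial (Fin r) k) :=
    Matrix.fromBlocks (Matrix.of fun i _ => u i) Y 0 (Matrix.of fun _ j => b j)
  apply rank_drop hr (n := 3) (by norm_num)
    (N.submatrix (finSumFinEquiv (m := 2) (n := 1)).symm (finSumFinEquiv (m := 1) (n := 3)).symm)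
  · intro i j
    simp only [Matrix.submatrix_apply]
    rcases (finSumFinEquiv (m := 2) (n := 1)).symm i with i | i <;>
      rcases (finSumFinEquiv (m := 1) (n := 3)).symm j with j | j <;>
      simp only [N, Matrix.fromBlocks_apply₁₁, Matrix.fromBlocks_apply₁₂, Matrix.fromBlocks_apply₂₁,
        Matrix.fromBlocks_apply₂₂, Matrix.of_apply, hu0, hb0, hY0, Matrix.zero_apply, map_zero]
  · intro a ha
    have e1 : (N.submatrix (finSumFinEquiv (m := 2) (n := 1)).symm
        (finSumFinEquiv (m := 1) (n := 3)).symm).map (eval a) =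
      (N.map (eval a)).submatrix (finSumFinEquiv (m := 2) (n := 1)).symm
        (finSumFinEquiv (m := 1) (n := 3)).symm := rfl
    rw [e1, Matrix.rank_submatrix]
    refine (h a ha).trans ?_
    have e2 : Matrix.fromBlocks (A.map (eval a)) (Y.map (eval a)) 0 (B.map (eval a)) =
        Matrix.fromBlocks (1 : Matrix (Fin 2) (Fin 2) k) 0 0
          (Matrix.of fun (i : Fin 2) (_ : Fin 1) => (![- eval a (v 1), eval a (v 0)] : Fin 2 → k) i)
        * N.map (eval a) *
        Matrix.fromBlocks (Matrix.of fun (_ : Fin 1) (j : Fin 2) => eval a (v j)) 0 0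
          (1 : Matrix (Fin 3) (Fin 3) k) := by
      simp only [N, Matrix.fromBlocks_map, Matrix.fromBlocks_multiply]
      simp only [Matrix.mul_zero, Matrix.zero_mul, add_zero, zero_add, Matrix.one_mul,
        Matrix.mul_one, Matrix.map_zero _ (map_zero (eval a))]
      congr 1
      · ext i j
        simp [Matrix.mul_apply, huv]
      · ext i j
        have e0 : eval a (B 0 j) = - (eval a (b j) * eval a (v 1)) := by
          have := congrArg (eval a) (hb2 j)
          rw [map_neg, map_mul] at this
          rw [← this, neg_neg]
        fin_cases i
        · simp [Matrix.mul_apply, e0, mul_comm]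
        · simp [Matrix.mul_apply, hb1, mul_comm]
    rw [e2]
    exact (Matrix.rank_mul_le_left _ _).trans (Matrix.rank_mul_le_right _ _)

theorem caseA {k : Type*} [Field k] [IsAlgClosed k] {r : ℕ} (hr : 3 ≤ r)
    (D : Matrix (Fin 8) (Fin 8) (MvPolynomial (Fin r) k))
    (hsq : D * D = 0) (h0 : ∀ i j : Fin 8, eval (0 : Fin r → k) (D i j) = 0)
    (hrank : ∀ a : Fin r → k, a ≠ 0 → (D.map (eval a)).rank = 4)
    (hz : ∀ i j : Fin 8,
        ¬((1 ≤ (i : ℕ) + 1 ∧ (i : ℕ) + 1 ≤ 2 ∧ 3 ≤ (j : ℕ) + 1 ∧ (j : ℕ) + 1 ≤ 8) ∨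
          (3 ≤ (i : ℕ) + 1 ∧ (i : ℕ) + 1 ≤ 4 ∧ 5 ≤ (j : ℕ) + 1 ∧ (j : ℕ) + 1 ≤ 8) ∨
          (5 ≤ (i : ℕ) + 1 ∧ (i : ℕ) + 1 ≤ 7 ∧ 8 ≤ (j : ℕ) + 1 ∧ (j : ℕ) + 1 ≤ 8)) →
        D i j = 0) : False := by
  let f : Fin 2 ⊕ Fin 2 → Fin 8 := Sum.elim ![0, 1] ![2, 3]
  let g : Fin 2 ⊕ Fin 3 → Fin 8 := Sum.elim ![2, 3] ![4, 5, 6]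
  apply block_case hr (D.submatrix ![0, 1] ![2, 3]) (D.submatrix ![0, 1] ![4, 5, 6])
    (D.submatrix ![2, 3] ![4, 5, 6])
  · ext1 i j
    have h1 := congrFun (congrFun hsq (![0, 1] i)) (![4, 5, 6] j)
    rw [Matrix.mul_apply] at h1 ⊢
    rw [Fin.sum_univ_two]
    rw [Fin.sum_univ_eight] at h1
    have z1 : ∀ i : Fin 2, ∀ l : Fin 8, l = 0 ∨ l = 1 → D ((![0, 1] : Fin 2 → Fin 8) i) l = 0 := by
      intro i l hl
      apply hz
      rcases hl with rfl | rfl <;> fin_cases i <;> decide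
    have z2 : ∀ j : Fin 3, ∀ l : Fin 8, l = 4 ∨ l = 5 ∨ l = 6 ∨ l = 7 →
        D l ((![4, 5, 6] : Fin 3 → Fin 8) j) = 0 := by
      intro i l hl
      apply hz
      rcases hl with rfl | rfl | rfl | rfl <;> fin_cases i <;> decide
    rw [z1 i 0 (by simp), z1 i 1 (by simp), z2 j 4 (by simp), z2 j 5 (by simp), z2 j 6 (by simp),
      z2 j 7 (by simp)] at h1
    simpa using h1
  · intro i j; exact h0 _ _
  · intro i j; exact h0 _ _
  · intro i j; exact h0 _ _
  · intro a ha
    have e1 : Matrix.fromBlocks ((D.submatrix ![0, 1] ![2, 3]).map (eval a))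
        ((D.submatrix ![0, 1] ![4, 5, 6]).map (eval a)) 0
        ((D.submatrix ![2, 3] ![4, 5, 6]).map (eval a)) = (D.map (eval a)).submatrix f g := by
      ext i j
      rcases i with i | i <;> rcases j with j | j
      · rfl
      · rfl
      · have : D (f (Sum.inr i)) (g (Sum.inl j)) = 0 := by
          apply hz
          fin_cases i <;> fin_cases j <;> decide
        simp [this]
      · rfl
    rw [e1]
    have hz' : ∀ i j : Fin 8, (j = 0 ∨ j = 1 ∨ ((i = 4 ∨ i = 5 ∨ i = 6 ∨ i = 7) ∧ j ≠ 7)) →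
        eval a (D i j) = 0 := by
      intro i j hij
      rw [hz i j, map_zero]
      revert i j
      decide
    have e2 : D.map (eval a) =
        ((1 : Matrix (Fin 8) (Fin 8) k).submatrix id f) * (D.map (eval a)).submatrix f g *
          ((1 : Matrix (Fin 8) (Fin 8) k).submatrix g id) +
        Matrix.vecMulVec (fun i => eval a (D i 7)) (Pi.single 7 1) := by
      ext i j
      simp only [Matrix.add_apply, Matrix.mul_apply, Fintype.sum_sum_type, Fin.sum_univ_two,
        Fin.sum_univ_three, Matrix.submatrix_apply, Matrix.map_apply, f, g, Sum.elim_inl,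
        Sum.elim_inr, Matrix.vecMulVec_apply]
      have hz2 := hz' i j
      fin_cases j <;> fin_cases i <;> simp [Matrix.one_apply] at hz2 ⊢ <;> exact hz2
    have h4 := hrank a ha
    have h5 : (D.map (eval a)).rank ≤ ((D.map (eval a)).submatrix f g).rank + 1 := by
      conv_lhs => rw [e2]
      refine (mat_rank_add_le _ _).trans (add_le_add ?_ (Matrix.rank_vecMulVec_le _ _))
      exact (Matrix.rank_mul_le_left _ _).trans (Matrix.rank_mul_le_right _ _)
    omega

theorem statement_4 {k : Type*} [Field k] [IsAlgClosed k] {r : ℕ}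
    (D : Matrix (Fin 8) (Fin 8) (MvPolynomial (Fin r) k))
    (hstd : StandardConditions D)
    (hzero : (∀ i j : Fin 8,
        ¬((1 ≤ (i : ℕ) + 1 ∧ (i : ℕ) + 1 ≤ 2 ∧ 3 ≤ (j : ℕ) + 1 ∧ (j : ℕ) + 1 ≤ 8) ∨
          (3 ≤ (i : ℕ) + 1 ∧ (i : ℕ) + 1 ≤ 4 ∧ 5 ≤ (j : ℕ) + 1 ∧ (j : ℕ) + 1 ≤ 8) ∨
          (5 ≤ (i : ℕ) + 1 ∧ (i : ℕ) + 1 ≤ 7 ∧ 8 ≤ (j : ℕ) + 1 ∧ (j : ℕ) + 1 ≤ 8)) →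
        D i j = 0) ∨
      (∀ i j : Fin 8,
        ¬((1 ≤ (i : ℕ) + 1 ∧ (i : ℕ) + 1 ≤ 1 ∧ 2 ≤ (j : ℕ) + 1 ∧ (j : ℕ) + 1 ≤ 8) ∨
          (2 ≤ (i : ℕ) + 1 ∧ (i : ℕ) + 1 ≤ 4 ∧ 5 ≤ (j : ℕ) + 1 ∧ (j : ℕ) + 1 ≤ 8) ∨
          (5 ≤ (i : ℕ) + 1 ∧ (i : ℕ) + 1 ≤ 6 ∧ 7 ≤ (j : ℕ) + 1 ∧ (j : ℕ) + 1 ≤ 8)) →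
        D i j = 0)) :
    r < 3 := by
  obtain ⟨_, hsq, h0, hrank, _⟩ := hstd
  by_contra hr
  push Not at hr
  rcases hzero with hz | hz
  · exact caseA hr D hsq h0 hrank hz
  · -- antitranspose
    apply caseA hr (D.transpose.submatrix Fin.revPerm Fin.revPerm)
    · rw [Matrix.submatrix_mul_equiv, ← Matrix.transpose_mul, hsq]
      rfl
    · intro i j; exact h0 _ _
    · intro a ha
      rw [← hrank a ha, ← Matrix.rank_transpose (D.map (eval a)),
        ← Matrix.rank_submatrix (D.map (eval a)).transpose Fin.revPerm Fin.revPerm]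
      rfl
    · intro i j hij
      apply hz
      intro hc
      apply hij
      simp only [Fin.revPerm_apply, Fin.val_rev] at hc
      omega
end
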